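/- Let P(a,c) := 4048·a^9·c^{15} + 61824·a^{12}·c^{12} + 242880·a^{15}·c^9 + 198352·a^{18}·c^6 + 24288·a^{21}·c^3 + 48·a^{24} and Q(a,b,c) := −16192·c^6·a^9·b^9 + 12144·c^3·a^9·b^{12} + 12144·c^3·a^{12}·b^9 − 1104·a^{12}·b^{12}, and F(a,b,c) := c^{24} + P(a,c) + P(b,c) + Q(a,b,c). Then the symmetrized weight enumerator of the ℤ/9ℤ-linear extended quadratic residue code C_2 of length 24 (the lifted extended quadratic residue code of length 24 modulo 9) satisfies swe_{C_2}(x_0,x_1,z) = 3^{−12}·F(3x_0, z−x_1, z+2x_1) in ℚ[x_0,x_1,z]. -/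

import Mathlib

/-!
The proof reduces the symmetrized weight enumerator of the code modulo 9 to a sum over pairs of words of
the ternary code modulo 3, and evaluates that sum.

Let `C` be the code modulo 3, which is self-dual of length 24 and dimension 12. A codeword modulo 9 is
`û + 3 v` with `u, v ∈ C` and `û` a fixed lift of `u`. Poisson summation over `v ∈ C` (`poisson`, `sum_fv`)
turns `3 ^ 12 * swe` into `∑ φ(u, w)` over `u, w ∈ C`, written in the variables `a = 3 x₀`, `b = z - x₁`,
`c = z + 2 x₁`. The term `φ(u, w)` vanishes unless `u` and `w` have disjoint supports; it is then
`c ^ (24 - wt u - wt w) * a ^ wt u * b ^ wt w` times the value of a cubic character which measures `û`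
against `w`.

The nonzero weights of `C` are multiples of 3 and at least 9 (`wt_mod3`, `wt_ne_small`), and the MacWilliams
identity then determines the number of words of each weight (`numWt_eq`). The pairs with `w = 0` or `u = 0`
therefore give `c ^ 24 + P(a, c) + P(b, c)`. The only other pairs with disjoint supports have a component of
weight 9, or both components of weight 12 (`phi_split`).

* The affine maps `j ↦ q j + k` of `ℤ/23ℤ`, `q` a square, are automorphisms; together with sign changes they
  have eight orbits on the 4048 words of weight 9 (`exists_word9`). The contribution of one representative of
  each orbit is found by enumeration (`T_rep9`).
* If both weights are 12 and the supports are disjoint, then `u = h + k` and `w = h - k` with `h` and `k` of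
  full weight 24. There are 48 such words, so that 48² pairs have to be enumerated (`sum_c5`).

The enumerations are evaluations by the kernel on natural numbers: a word is packed into one number with
24 digits, and the terms are collected in a histogram indexed by the exponents of the monomial and of the
cube root of unity (`psi_stat`, `histOK_sum`).

To identify the code, `X ^ 23 - 1` is factored explicitly modulo 9. By irreducibility of `g` and uniqueness
of Hensel lifts (`hensel_unique`), `g2` is one of the two factors of degree 11. These are reversals of each
other up to sign, so in both cases the code is, up to a permutation of the coordinates, the row space of the
explicit matrix `rowsL` (`code_eq`).
-/

open MvPolynomial
open scoped Classical

noncomputable section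

/-- The symmetrized weight enumerator of a code `C ⊆ (ℤ/Nℤ)^n` (for `N = p^m`):
the variable `X i` for `i < m` records the number of coordinates of `p`-adic valuation `i`,
and the last variable `X m` (the variable `z`) records the number of zero coordinates. -/
def swe (p m : ℕ) {N n : ℕ} [NeZero N]
    (C : Submodule (ZMod N) (Fin n → ZMod N)) : MvPolynomial (Fin (m + 1)) ℚ :=
  ∑ c : Fin n → ZMod N, if c ∈ C then
      (∏ i : Fin m, (X (Fin.castSucc i) : MvPolynomial (Fin (m + 1)) ℚ) ^
          (Finset.univ.filter fun j => c j ≠ 0 ∧ padicValNat p (c j).val = (i : ℕ)).card)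
        * (X (Fin.last m) : MvPolynomial (Fin (m + 1)) ℚ) ^
            (Finset.univ.filter fun j => c j = 0).card
    else 0

/-- `g` is a monic irreducible degree-11 factor of `x^23 - 1` over `ℤ/pℤ`. -/
def IsQRFactor (p : ℕ) (g : Polynomial (ZMod p)) : Prop :=
  g.Monic ∧ g.natDegree = 11 ∧ Irreducible g ∧ g ∣ (Polynomial.X ^ 23 - 1)

/-- `gm` is the (Hensel) lift of `g` to `ℤ/Nℤ` and `C` is the associated lifted extended
cyclic quadratic residue code of length 24: the extension by an overall parity check of the
cyclic code of length 23 generated by `gm`. -/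
def IsLiftedQR {p N : ℕ} (hpN : p ∣ N) (g : Polynomial (ZMod p)) (gm : Polynomial (ZMod N))
    (C : Submodule (ZMod N) (Fin 24 → ZMod N)) : Prop :=
  gm.Monic ∧ gm.natDegree = 11 ∧ gm ∣ (Polynomial.X ^ 23 - 1) ∧
    gm.map (ZMod.castHom hpN (ZMod p)) = g ∧
    ∀ c : Fin 24 → ZMod N, c ∈ C ↔
      ((∃ f : Polynomial (ZMod N), ∀ j : Fin 23,
          c (Fin.castSucc j) = ((f * gm) %ₘ (Polynomial.X ^ 23 - 1)).coeff (j : ℕ)) ∧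
        c (Fin.last 23) = - ∑ j : Fin 23, c (Fin.castSucc j))

/-- `P(a,c)` from the statement. -/
def Pt {σ : Type*} (a c : MvPolynomial σ ℚ) : MvPolynomial σ ℚ :=
  4048 * a ^ 9 * c ^ 15 + 61824 * a ^ 12 * c ^ 12 + 242880 * a ^ 15 * c ^ 9
    + 198352 * a ^ 18 * c ^ 6 + 24288 * a ^ 21 * c ^ 3 + 48 * a ^ 24

/-- `Q(a,b,c)` from the statement. -/
def Qt {σ : Type*} (a b c : MvPolynomial σ ℚ) : MvPolynomial σ ℚ :=
  -(16192 * c ^ 6 * a ^ 9 * b ^ 9) + 12144 * c ^ 3 * a ^ 9 * b ^ 12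
    + 12144 * c ^ 3 * a ^ 12 * b ^ 9 - 1104 * a ^ 12 * b ^ 12

/-- `F(a,b,c)` from the statement. -/
def Ft {σ : Type*} (a b c : MvPolynomial σ ℚ) : MvPolynomial σ ℚ :=
  c ^ 24 + Pt a c + Pt b c + Qt a b c

set_option maxRecDepth 100000

/-! ### The generator matrix and the functions evaluated by the kernel -/

/-- Coefficients (constant term first) of one of the two monic degree-11 Hensel factors of `X ^ 23 - 1`
modulo 9. -/
def gCoef : List ℕ := [8, 3, 6, 4, 0, 4, 0, 2, 5, 1, 4, 1]

/-- Coefficients of the power series inverse of the polynomial with coefficients `gCoef`, modulo `X ^ 12`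
and 9. They express the systematic generator matrix `rowsL` through the shifts of that polynomial. -/
def vCoef : List ℕ := [8, 6, 3, 5, 3, 2, 5, 4, 5, 7, 3, 4]

/-- The supports of the words `reps9`, as bit masks: bit `j` is set when coordinate `j` is nonzero. -/
def suppList : List ℕ := [8392617, 132895, 8915343, 2100707, 8651671, 789147, 4205771, 34171]

/-- The systematic generator matrix, modulo 9, of the extended code generated by `gCoef`. -/
def rowsL : List (List ℕ) := [
  [1, 0, 0, 0, 0, 0, 0, 0, 0, 0, 0, 0, 8, 3, 6, 4, 0, 4, 0, 2, 5, 1, 4, 7],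
  [0, 1, 0, 0, 0, 0, 0, 0, 0, 0, 0, 0, 4, 5, 6, 8, 4, 2, 4, 1, 0, 1, 3, 6],
  [0, 0, 1, 0, 0, 0, 0, 0, 0, 0, 0, 0, 3, 4, 5, 3, 8, 1, 2, 7, 4, 6, 7, 3],
  [0, 0, 0, 1, 0, 0, 0, 0, 0, 0, 0, 0, 7, 0, 7, 4, 3, 7, 1, 6, 8, 6, 5, 8],
  [0, 0, 0, 0, 1, 0, 0, 0, 0, 0, 0, 0, 5, 1, 6, 5, 4, 1, 7, 0, 8, 3, 4, 0],
  [0, 0, 0, 0, 0, 1, 0, 0, 0, 0, 0, 0, 4, 2, 4, 8, 5, 6, 1, 8, 7, 4, 5, 8],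
  [0, 0, 0, 0, 0, 0, 1, 0, 0, 0, 0, 0, 5, 7, 8, 2, 8, 3, 6, 0, 1, 2, 2, 0],
  [0, 0, 0, 0, 0, 0, 0, 1, 0, 0, 0, 0, 2, 8, 4, 0, 2, 0, 3, 2, 8, 8, 3, 4],
  [0, 0, 0, 0, 0, 0, 0, 0, 1, 0, 0, 0, 3, 2, 8, 1, 0, 8, 0, 6, 5, 5, 5, 1],
  [0, 0, 0, 0, 0, 0, 0, 0, 0, 1, 0, 0, 5, 6, 8, 6, 1, 7, 8, 8, 8, 0, 3, 2],
  [0, 0, 0, 0, 0, 0, 0, 0, 0, 0, 1, 0, 3, 5, 6, 5, 6, 7, 7, 2, 2, 5, 6, 8],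
  [0, 0, 0, 0, 0, 0, 0, 0, 0, 0, 0, 1, 6, 3, 5, 0, 5, 0, 7, 4, 8, 5, 8, 2]]

/-- Message digits of eight words of weight 9 of the code modulo 3: representatives of the words of
weight 9 under sign change and the affine maps `j ↦ q * j + k` with `q` a square modulo 23. -/
def reps9 : List (List ℕ) := [
  [2, 0, 0, 1, 0, 1, 0, 2, 2, 1, 1, 1],
  [2, 1, 2, 2, 2, 0, 0, 0, 1, 2, 2, 0],
  [2, 2, 2, 2, 0, 0, 0, 2, 1, 0, 0, 1],
  [2, 2, 0, 0, 0, 2, 1, 1, 1, 0, 1, 1],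
  [2, 2, 1, 0, 2, 0, 0, 2, 2, 2, 0, 0],
  [2, 2, 0, 1, 1, 0, 0, 2, 0, 1, 0, 2],
  [2, 2, 0, 1, 0, 0, 2, 2, 0, 0, 2, 1],
  [2, 1, 0, 2, 1, 1, 1, 0, 2, 0, 1, 0]]

/-- Message digits of the 24 words of full weight 24 of the code modulo 3, up to sign. -/
def reps24 : List (List ℕ) := [
  [1, 1, 1, 1, 1, 1, 1, 1, 1, 1, 1, 1],
  [1, 1, 1, 1, 1, 2, 1, 2, 1, 1, 2, 2],
  [1, 1, 1, 1, 2, 1, 2, 1, 1, 2, 2, 1],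
  [1, 1, 1, 1, 2, 2, 2, 2, 2, 1, 2, 1],
  [1, 1, 1, 2, 1, 2, 1, 1, 2, 2, 1, 1],
  [1, 1, 1, 2, 2, 2, 2, 2, 1, 2, 1, 2],
  [1, 1, 2, 1, 2, 1, 1, 1, 1, 2, 2, 2],
  [1, 1, 2, 1, 2, 1, 1, 2, 2, 1, 1, 2],
  [1, 1, 2, 2, 1, 1, 2, 1, 2, 1, 1, 1],
  [1, 1, 2, 2, 1, 1, 2, 2, 1, 2, 1, 2],
  [1, 1, 2, 2, 1, 2, 1, 2, 2, 2, 2, 1],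
  [1, 1, 2, 2, 2, 2, 2, 1, 2, 1, 2, 2],
  [1, 2, 1, 1, 1, 1, 2, 2, 2, 2, 2, 1],
  [1, 2, 1, 1, 2, 2, 1, 1, 2, 2, 1, 2],
  [1, 2, 1, 2, 1, 1, 1, 1, 2, 2, 2, 2],
  [1, 2, 1, 2, 1, 1, 2, 2, 1, 1, 2, 2],
  [1, 2, 1, 2, 2, 1, 1, 2, 2, 1, 1, 2],
  [1, 2, 1, 2, 2, 2, 2, 1, 1, 1, 1, 1],
  [1, 2, 2, 1, 1, 2, 1, 2, 1, 1, 1, 1],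
  [1, 2, 2, 1, 1, 2, 2, 1, 1, 2, 1, 2],
  [1, 2, 2, 1, 1, 2, 2, 1, 2, 1, 2, 2],
  [1, 2, 2, 1, 2, 1, 2, 2, 2, 2, 1, 1],
  [1, 2, 2, 2, 2, 1, 1, 1, 1, 1, 2, 1],
  [1, 2, 2, 2, 2, 2, 1, 2, 1, 2, 2, 1]]

/-- A list of small numbers as the digits, in base `65536`, of one natural number. -/
def packL : List ℕ → ℕ
  | [] => 0
  | x :: xs => x + 65536 * packL xs

/-- The packed rows of the generator matrix. -/
def rowPs : List ℕ := rowsL.map packL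

/-- Dot product of two lists; with `rowPs` it gives the packed, unreduced word of a message. -/
def dotP : List ℕ → List ℕ → ℕ
  | m :: ms, r :: rs => m * r + dotP ms rs
  | _, _ => 0

/-- The contribution of one coordinate to the statistic `stat`, for a digit `y` modulo 9 and a digit `b`
modulo 3. In base 32, the three low fields are the indicators of `y` being a unit, of `b ≠ 0`, and of
both at once; above them, from `32768` on, stands the exponent of the cube root of unity. -/
def cell (y b : ℕ) : ℕ :=
  bif Nat.beq (Nat.mod y 3) 0 then
    (bif Nat.beq b 0 then 0
      else Nat.add 32 (Nat.mul 32768 (Nat.mod (Nat.mul (Nat.mul 2 (Nat.div y 3)) b) 3)))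
  else (bif Nat.beq b 0 then 1 else 1057)

/-- Sum of `cell` over the first `n` digits of the packed words `Y` (read modulo 9) and `W` (read modulo 3). -/
def stat : ℕ → ℕ → ℕ → ℕ
  | 0, _, _ => 0
  | n + 1, Y, W => Nat.add (cell (Nat.mod (Nat.mod Y 65536) 9) (Nat.mod (Nat.mod W 65536) 3))
      (stat n (Nat.div Y 65536) (Nat.div W 65536))

/-- The statistic `s` reduced to the data of a monomial: both weights and the exponent modulo 3 of the
cube root of unity. The value `4096` marks pairs of words with intersecting supports and pairs whose
weights do not satisfy `c`. -/
def keyc (c : ℕ → ℕ → Bool) (s : ℕ) : ℕ :=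
  bif c (s % 32) (s / 32 % 32) && Nat.beq (s / 1024 % 32) 0 then
    s % 1024 + 1024 * (s / 32768 % 3)
  else 4096

/-- All sums `acc + ∑ ε_i r_i` with `ε_i ∈ {0, 1, 2}`, where `ε_i = 0` unless the entry is flagged `true`. -/
def leaves : List (ℕ × Bool) → ℕ → List ℕ
  | [], acc => [acc]
  | (r, true) :: rs, acc => leaves rs acc ++ (leaves rs (acc + r) ++ leaves rs (acc + 2 * r))
  | (_, false) :: rs, acc => leaves rs acc

/-- The number of occurrences of `k` in a list. -/
def countN (k : ℕ) : List ℕ → ℕ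
  | [] => 0
  | x :: xs => (bif Nat.beq x k then 1 else 0) + countN k xs

/-- The list with all occurrences of `k` removed. -/
def dropN (k : ℕ) : List ℕ → List ℕ
  | [] => []
  | x :: xs => bif Nat.beq x k then dropN k xs else x :: dropN k xs

/-- Whether the list of pairs (value, multiplicity) is the histogram of the given list. -/
def histOK : List (ℕ × ℕ) → List ℕ → Bool
  | [], l => l.isEmpty
  | (k, c) :: D, l => Nat.beq (countN k l) c && histOK D (dropN k l)

/-- The weight condition `wt u = 9`, `wt w ≠ 0`. -/
def c3 (i j : ℕ) : Bool := Nat.beq i 9 && !Nat.beq j 0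

/-- The weight condition `wt w = 9`, `wt u ∉ {0, 9}`. -/
def c4 (i j : ℕ) : Bool := Nat.beq j 9 && (!Nat.beq i 0 && !Nat.beq i 9)

/-- The weight condition `wt u = wt w = 12`. -/
def c5 (i j : ℕ) : Bool := Nat.beq i 12 && Nat.beq j 12

/-- The histograms of the keys of all pairs having the word with message digits `m` as first component
(with condition `c3`), and of those having it as second component (with condition `c4`). The other
component runs over the words that vanish where the message `m` does not. The parameter `k` is the
multiplicity of the key `4096`, which contributes nothing. -/
def check9 (m : List ℕ) (k : ℕ) : Bool :=
  let U := dotP m rowPs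
  let ls := leaves (List.zipWith (fun r x => (r, Nat.beq x 0)) rowPs m) 0
  histOK [(297, 14), (1321, 18), (2345, 18), (393, 12), (1417, 9), (2441, 9), (4096, k)]
      (ls.map fun w => keyc c3 (stat 24 U w)) &&
  histOK [(300, 12), (1324, 9), (2348, 9), (4096, k + 50)]
      (ls.map fun w => keyc c4 (stat 24 w U))

/-- The packed words of full weight: `reps24` and its multiples by `8 = -1`. -/
def reps24s : List ℕ :=
  let l := reps24.map (fun m => dotP m rowPs)
  l ++ l.map (fun x => 8 * x)

/-- The histogram of the keys of all pairs `(h + k, h - k)` with `h` and `k` of full weight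
(`h + 2 * k` represents `h - k` modulo 3). -/
def check24 : Bool :=
  histOK [(1420, 1104), (2444, 1104), (4096, 96)]
    (reps24s.flatMap fun h => reps24s.map fun k => keyc c5 (stat 24 (h + k) (h + 2 * k)))

/-- Whether no word `acc + ∑ ε_i r_i` with at most `b` nonzero `ε_i ∈ {0, 1, 2}` has weight 3 or 6. -/
def enum3 : List ℕ → ℕ → ℕ → Bool
  | [], _, acc => let s := stat 24 acc 0; !Nat.beq s 3 && !Nat.beq s 6
  | _ :: _, 0, acc => let s := stat 24 acc 0; !Nat.beq s 3 && !Nat.beq s 6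
  | r :: rs, b + 1, acc => enum3 rs (b + 1) acc &&
      (enum3 rs b (acc + r) && enum3 rs b (acc + 2 * r))

/-- Binary digit `n` of `s`. -/
def bitAt (s n : ℕ) : ℕ := Nat.mod (Nat.div s (Nat.pow 2 n)) 2

/-- The first `n` bits of the image of the bit mask `s` under `j ↦ q * j + k` modulo 23. -/
def affMask (s q k : ℕ) : ℕ → ℕ
  | 0 => 0
  | n + 1 => Nat.add (affMask s q k n)
      (Nat.mul (Nat.pow 2 n) (bitAt s (Nat.mod (Nat.add (Nat.mul q n) k) 23)))

/-- The support mask of the `n`-th word of weight 9, for `n < 2024 = 8 * 11 * 23`: `n / 253` selects the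
representative, `n / 23 % 11` the multiplier and `n % 23` the translation; bit 23 is fixed. -/
def maskOf (n : ℕ) : ℕ :=
  Nat.add (affMask (suppList.getD (Nat.div n 253) 0)
      (Nat.mod (Nat.pow 3 (Nat.mod (Nat.div n 23) 11)) 23) (Nat.mod n 23) 23)
    (Nat.mul 8388608 (bitAt (suppList.getD (Nat.div n 253) 0) 23))

/-- Radix test for the absence of repetitions in a list of `b`-bit numbers; fast enough for kernel
evaluation on a list of length 2024. -/
def nodupBits : ℕ → List ℕ → Bool
  | _, [] => true
  | _, [_] => true
  | 0, _ :: _ :: _ => false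
  | b + 1, x :: y :: l =>
      nodupBits b ((x :: y :: l).filter fun n => Nat.beq (bitAt n b) 0) &&
      nodupBits b ((x :: y :: l).filter fun n => !Nat.beq (bitAt n b) 0)

/-- Entry `j` of row `i` of the generator matrix. -/
def rowN (i j : ℕ) : ℕ := (rowsL.getD i []).getD j 0

/-- Messages of the code modulo 3. -/
abbrev Msg := Fin 12 → ZMod 3

/-- Reduction from `ℤ/9ℤ` to `ℤ/3ℤ`. -/
def red : ZMod 9 →+* ZMod 3 := ZMod.castHom (by norm_num) (ZMod 3)

/-- The codeword modulo 9 of the message `p`. -/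
def enc9 (p : Fin 12 → ZMod 9) (j : Fin 24) : ZMod 9 := ∑ i, p i * (rowN i j : ZMod 9)

/-- The codeword modulo 3 of the message `u`. -/
def enc1 (u : Msg) (j : Fin 24) : ZMod 3 := ∑ i, u i * (rowN i j : ZMod 3)

/-- Position of the `i`-th message digit in a codeword (the encoding is systematic). -/
def pos (i : Fin 12) : Fin 24 := Fin.castLE (by norm_num) i

/-- The Hamming weight of the codeword modulo 3 of `u`. -/
def wt (u : Msg) : ℕ := (Finset.univ.filter fun j => enc1 u j ≠ 0).card

/-! ### Encoding and self-duality -/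

theorem enc9_pos (p : Fin 12 → ZMod 9) (k : Fin 12) : enc9 p (pos k) = p k := by
  have h : ∀ i k : Fin 12, (rowN i (pos k) : ZMod 9) = if i = k then 1 else 0 := by
    decide +kernel
  simp [enc9, h]

theorem enc1_pos (u : Msg) (k : Fin 12) : enc1 u (pos k) = u k := by
  have h : ∀ i k : Fin 12, (rowN i (pos k) : ZMod 3) = if i = k then 1 else 0 := by
    decide +kernel
  simp [enc1, h]

theorem enc9_add (p q : Fin 12 → ZMod 9) (j : Fin 24) : enc9 (p + q) j = enc9 p j + enc9 q j := by
  simp [enc9, add_mul, Finset.sum_add_distrib]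

theorem enc1_add (p q : Msg) (j : Fin 24) : enc1 (p + q) j = enc1 p j + enc1 q j := by
  simp [enc1, add_mul, Finset.sum_add_distrib]

theorem enc9_neg (p : Fin 12 → ZMod 9) (j : Fin 24) : enc9 (-p) j = -enc9 p j := by
  simp [enc9]

theorem enc1_neg (p : Msg) (j : Fin 24) : enc1 (-p) j = -enc1 p j := by
  simp [enc1]

theorem enc1_sub (p q : Msg) (j : Fin 24) : enc1 (p - q) j = enc1 p j - enc1 q j := by
  rw [sub_eq_add_neg, enc1_add, enc1_neg, sub_eq_add_neg]

theorem enc1_zero (j : Fin 24) : enc1 0 j = 0 := by simp [enc1]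

theorem red_enc9 (p : Fin 12 → ZMod 9) (j : Fin 24) : red (enc9 p j) = enc1 (fun i => red (p i)) j := by
  simp [enc9, enc1]

theorem enc1_self_orthogonal (u w : Msg) : ∑ j, enc1 u j * enc1 w j = 0 := by
  have h : ∀ i k : Fin 12, ∑ j : Fin 24, (rowN i j : ZMod 3) * (rowN k j : ZMod 3) = 0 := by
    decide +kernel
  have : ∑ j, enc1 u j * enc1 w j =
      ∑ i, ∑ k, u i * w k * ∑ j : Fin 24, (rowN i j : ZMod 3) * (rowN k j : ZMod 3) := by
    simp only [Finset.mul_sum]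
    rw [Finset.sum_comm_cycle]
    refine Finset.sum_congr rfl fun j _ => ?_
    rw [enc1, enc1, Finset.sum_mul_sum]
    refine Finset.sum_congr rfl fun i _ => Finset.sum_congr rfl fun k _ => ?_
    ring
  rw [this]; simp [h]

/-- The code modulo 3 contains its dual: with generator matrix `(I | A)` one has `A Aᵀ = -I`, hence
`Aᵀ A = -I`. -/
theorem mem_of_orthogonal (s : Fin 24 → ZMod 3)
    (h : ∀ i : Fin 12, ∑ j, s j * (rowN i j : ZMod 3) = 0) : s = enc1 (fun k => s (pos k)) := by
  let hi (k : Fin 12) : Fin 24 := Fin.natAdd 12 k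
  have hA : ∀ j k : Fin 12, ∑ i : Fin 12, (rowN i (hi j) : ZMod 3) * (rowN i (hi k) : ZMod 3)
      = if k = j then -1 else 0 := by decide +kernel
  have h1 : ∀ i k : Fin 12, (rowN i (pos k) : ZMod 3) = if k = i then 1 else 0 := by
    decide +kernel
  have hsum : ∀ f : Fin 24 → ZMod 3, ∑ j, f j = ∑ k, f (pos k) + ∑ k, f (hi k) := fun f =>
    Fin.sum_univ_add (a := 12) (b := 12) f
  have h2 : ∀ i, s (pos i) = -∑ k, s (hi k) * (rowN i (hi k) : ZMod 3) := by
    intro i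
    have := h i
    rw [hsum] at this
    simp only [h1, mul_ite, mul_one, mul_zero, Finset.sum_ite_eq', Finset.mem_univ, if_true] at this
    exact eq_neg_of_add_eq_zero_left this
  funext j
  refine Fin.addCases (m := 12) (n := 12) (fun k => ?_) (fun k => ?_) j
  · exact (enc1_pos (fun k => s (pos k)) k).symm
  · change s (hi k) = enc1 _ (hi k)
    simp only [enc1, h2, neg_mul, Finset.sum_neg_distrib, Finset.sum_mul]
    rw [Finset.sum_comm]
    have : ∀ x, ∑ i : Fin 12, s (hi x) * (rowN i (hi x) : ZMod 3) * (rowN i (hi k) : ZMod 3)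
        = s (hi x) * if k = x then -1 else 0 := by
      intro x; rw [← hA x k, Finset.mul_sum]; simp only [mul_assoc]
    simp [this]

/-! ### Characters of `ℤ/3ℤ` and Poisson summation -/

/-- A primitive cube root of unity. -/
def omega : ℂ := Complex.exp (2 * Real.pi * Complex.I / 3)

theorem omega_prim : IsPrimitiveRoot omega 3 := by
  simpa [omega] using Complex.isPrimitiveRoot_exp 3 (by norm_num)

theorem omega_cube : omega ^ 3 = 1 := omega_prim.pow_eq_one

theorem omega_sum : 1 + omega + omega ^ 2 = 0 := by
  have := omega_prim.geom_sum_eq_zero (by norm_num)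
  simpa [Finset.sum_range_succ] using this

/-- The additive character of `ℤ/3ℤ` with value `omega` at 1. -/
def chi (s : ZMod 3) : ℂ := omega ^ s.val

theorem omega_pow_mod (n : ℕ) : omega ^ (n % 3) = omega ^ n := by
  conv_rhs => rw [← Nat.div_add_mod n 3, pow_add, pow_mul, omega_cube, one_pow, one_mul]

theorem chi_add (s t : ZMod 3) : chi (s + t) = chi s * chi t := by
  rw [chi, ZMod.val_add, omega_pow_mod, pow_add, chi, chi]

theorem chi_zero : chi 0 = 1 := by simp [chi]

theorem chi_sum {ι : Type*} (s : Finset ι) (f : ι → ZMod 3) :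
    chi (∑ i ∈ s, f i) = ∏ i ∈ s, chi (f i) := by
  classical
  induction s using Finset.induction_on with
  | empty => simp [chi_zero]
  | insert a s ha ih => rw [Finset.sum_insert ha, Finset.prod_insert ha, chi_add, ih]

theorem sum_zmod3 (f : ZMod 3 → ℂ) : ∑ s, f s = f 0 + f 1 + f 2 := Fin.sum_univ_three f

theorem chi_one : chi 1 = omega := by
  rw [chi, show (1 : ZMod 3).val = 1 from rfl, pow_one]

theorem chi_two : chi 2 = omega ^ 2 := by
  rw [chi, show (2 : ZMod 3).val = 2 from rfl]

theorem chi_orth (t : ZMod 3) : ∑ x, chi (x * t) = if t = 0 then 3 else 0 := by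
  have h : t = 0 ∨ t = 1 ∨ t = 2 := by revert t; decide
  rw [sum_zmod3]
  rcases h with rfl | rfl | rfl
  · simp [chi_zero]; norm_num
  · rw [if_neg (by decide)]
    simpa [chi_zero, chi_one, chi_two] using omega_sum
  · rw [if_neg (by decide), show (2 : ZMod 3) * 2 = 1 by decide]
    simp only [zero_mul, one_mul, chi_zero, chi_one, chi_two]
    linear_combination omega_sum

/-- Poisson summation for the self-dual code modulo 3. -/
theorem poisson (F : Fin 24 → ZMod 3 → ℂ) :
    ∑ w : Msg, ∏ j, ∑ s, F j s * chi (s * enc1 w j) = 3 ^ 12 * ∑ m : Msg, ∏ j, F j (enc1 m j) := by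
  have e1 : ∀ w : Msg, ∏ j, ∑ s, F j s * chi (s * enc1 w j)
      = ∑ s : Fin 24 → ZMod 3, (∏ j, F j (s j)) * ∏ i, chi (w i * ∑ j, s j * (rowN i j : ZMod 3)) := by
    intro w
    rw [Finset.prod_univ_sum, Fintype.piFinset_univ]
    refine Finset.sum_congr rfl fun s _ => ?_
    rw [Finset.prod_mul_distrib, ← chi_sum, ← chi_sum]
    refine congrArg (fun t => (∏ j, F j (s j)) * chi t) ?_
    simp only [enc1, Finset.mul_sum]
    rw [Finset.sum_comm]
    refine Finset.sum_congr rfl fun i _ => Finset.sum_congr rfl fun j _ => ?_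
    ring
  simp only [e1]
  rw [Finset.sum_comm]
  have e2 : ∀ s : Fin 24 → ZMod 3,
      ∑ w : Msg, ∏ i, chi (w i * ∑ j, s j * (rowN i j : ZMod 3))
        = if (∀ i : Fin 12, ∑ j, s j * (rowN i j : ZMod 3) = 0) then 3 ^ 12 else 0 := by
    intro s
    have := Finset.prod_univ_sum (fun _ : Fin 12 => (Finset.univ : Finset (ZMod 3)))
      (fun i x => chi (x * ∑ j, s j * (rowN i j : ZMod 3)))
    rw [Fintype.piFinset_univ] at this
    rw [← this]
    simp only [chi_orth]
    split_ifs with h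
    · simp [h]
    · push Not at h
      obtain ⟨i, hi⟩ := h
      exact Finset.prod_eq_zero (Finset.mem_univ i) (if_neg hi)
  simp only [← Finset.mul_sum, e2]
  rw [Finset.mul_sum]
  symm
  refine Fintype.sum_of_injective (fun m : Msg => enc1 m) ?_ _ _ ?_ ?_
  · intro m m' h
    funext k
    rw [← enc1_pos m k, ← enc1_pos m' k]; exact congrFun h (pos k)
  · intro s hs
    rw [if_neg, mul_zero]
    intro h
    exact hs ⟨_, (mem_of_orthogonal s h).symm⟩
  · intro m
    rw [if_pos, mul_comm]
    intro i
    have := enc1_self_orthogonal m (Pi.single i 1)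
    simpa [enc1, Pi.single_apply] using this

/-! ### From the weight enumerator to a sum over pairs of words modulo 3 -/

/-- The embedding `s ↦ 3 s` of `ℤ/3ℤ` in `ℤ/9ℤ`. -/
def emb (s : ZMod 3) : ZMod 9 := 3 * (s.val : ZMod 9)

/-- The lift of a message modulo 3 with digits in `{0, 1, 2}`. -/
def lft (u : Msg) : Fin 12 → ZMod 9 := fun i => ((u i).val : ZMod 9)

/-- For `y` divisible by 3, the quotient `y / 3` in `ℤ/3ℤ`; its value at units is irrelevant. -/
def t9 (y : ZMod 9) : ZMod 3 := ((y.val / 3 : ℕ) : ZMod 3)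

/-- The variable attached to `y`: `z` at zero, `x1` at valuation 1 and `x0` at units. -/
def fv (x0 x1 z : ℂ) (y : ZMod 9) : ℂ := if y = 0 then z else if red y = 0 then x1 else x0

/-- The Fourier transform of `fv` along the coset `y + 3 ℤ/9ℤ`, at the frequency `β`, in the variables
`a = 3 x0`, `b = z - x1`, `c = z + 2 x1` (see `kern_sum`). -/
def kern (a b c : ℂ) (y : ZMod 9) (β : ZMod 3) : ℂ :=
  if red y = 0 then (if β = 0 then c else b * chi (-(t9 y * β))) else (if β = 0 then a else 0)

theorem emb_add (s t : ZMod 3) : emb (s + t) = emb s + emb t := by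
  revert s t; decide +kernel

theorem emb_mul (s : ZMod 3) (n : ℕ) : emb (s * n) = emb s * n := by
  have h : ∀ (s : ZMod 3) (x : ZMod 9), emb (s * red x) = emb s * x := by decide +kernel
  have := h s n
  rwa [map_natCast] at this

theorem emb_sum {ι : Type*} (s : Finset ι) (f : ι → ZMod 3) :
    emb (∑ i ∈ s, f i) = ∑ i ∈ s, emb (f i) := by
  classical
  induction s using Finset.induction_on with
  | empty => simp [emb]
  | insert a s ha ih => rw [Finset.sum_insert ha, Finset.sum_insert ha, emb_add, ih]

theorem enc9_emb (v : Msg) (j : Fin 24) : enc9 (fun i => emb (v i)) j = emb (enc1 v j) := by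
  simp only [enc9, enc1, emb_sum, emb_mul]

theorem kern_sum (x0 x1 z : ℂ) (y : ZMod 9) (β : ZMod 3) :
    ∑ s, fv x0 x1 z (y + emb s) * chi (s * β) = kern (3 * x0) (z - x1) (z + 2 * x1) y β := by
  by_cases hy : red y = 0
  · have h1 : ∀ y : ZMod 9, red y = 0 → ∀ s, red (y + emb s) = 0 ∧ (y + emb s = 0 ↔ s = - t9 y) := by
      decide +kernel
    have h2 : ∀ s, fv x0 x1 z (y + emb s) * chi (s * β)
        = x1 * chi (s * β) + (if s = - t9 y then (z - x1) * chi (s * β) else 0) := by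
      intro s
      have := h1 y hy s
      by_cases hs : s = - t9 y
      · rw [fv, if_pos (this.2.2 hs), if_pos hs]; ring
      · rw [fv, if_neg (fun h => hs (this.2.1 h)), if_pos this.1, if_neg hs, add_zero]
    simp only [h2]
    rw [Finset.sum_add_distrib, ← Finset.mul_sum, chi_orth, Finset.sum_ite_eq', kern, if_pos hy]
    simp only [Finset.mem_univ, if_true]
    split_ifs with hb
    · rw [hb, mul_zero, chi_zero]; ring
    · rw [neg_mul]; ring
  · have h1 : ∀ y : ZMod 9, red y ≠ 0 → ∀ s, red (y + emb s) ≠ 0 ∧ y + emb s ≠ 0 := by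
      decide +kernel
    have h2 : ∀ s, fv x0 x1 z (y + emb s) * chi (s * β) = x0 * chi (s * β) := by
      intro s
      rw [fv, if_neg (h1 y hy s).2, if_neg (h1 y hy s).1]
    simp only [h2]
    rw [← Finset.mul_sum, chi_orth, kern, if_neg hy]
    split_ifs <;> ring

theorem kern_emb (a b c : ℂ) (y : ZMod 9) (s β : ZMod 3) :
    kern a b c (y + emb s) β = chi (-(s * β)) * kern a b c y β := by
  have h : ∀ (y : ZMod 9) (s : ZMod 3), red (y + emb s) = red y ∧ (red y = 0 → t9 (y + emb s) = s + t9 y) := by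
    decide +kernel
  obtain ⟨h1, h2⟩ := h y s
  unfold kern
  rw [h1]
  split_ifs with hy hb hb
  · simp [hb, chi_zero]
  · rw [h2 hy, add_mul, neg_add, chi_add]; ring
  · simp [hb, chi_zero]
  · ring

theorem kern_neg (a b c : ℂ) (y : ZMod 9) (β : ZMod 3) :
    kern a b c (-y) (-β) = kern a b c y β := by
  have h : ∀ (y : ZMod 9), (red y = 0 → t9 (-y) = - t9 y) := by
    decide +kernel
  unfold kern
  simp only [map_neg, neg_eq_zero]
  split_ifs with hy hb hb
  · rfl
  · rw [h y hy, neg_mul_neg]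
  · rfl
  · rfl

/-- The product of `kern` over the coordinates of the codeword of `p` modulo 9 and that of `w` modulo 3. -/
def psi (a b c : ℂ) (p : Fin 12 → ZMod 9) (w : Msg) : ℂ := ∏ j, kern a b c (enc9 p j) (enc1 w j)

/-- The term attached to a pair of words modulo 3: `psi` at any lift of `u`. It vanishes unless `u` and `w`
have disjoint supports, and is then a monomial in `a`, `b`, `c` times a cube root of unity. -/
def phi (a b c : ℂ) (u w : Msg) : ℂ := psi a b c (lft u) w

/-- Changing the lift by `3 v` multiplies `psi` by the character value of the inner product of `v` and
`w`, which is trivial because the code modulo 3 is self-orthogonal. -/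
theorem psi_add_emb (a b c : ℂ) (p : Fin 12 → ZMod 9) (v w : Msg) :
    psi a b c (p + fun i => emb (v i)) w = psi a b c p w := by
  unfold psi
  simp only [enc9_add, enc9_emb, kern_emb]
  rw [Finset.prod_mul_distrib, ← chi_sum, Finset.sum_neg_distrib, enc1_self_orthogonal, neg_zero, chi_zero,
    one_mul]

theorem exists_emb : ∀ x y : ZMod 9, red x = red y → ∃ s, x = y + emb s := by decide +kernel

theorem psi_congr (a b c : ℂ) {p q : Fin 12 → ZMod 9} (h : ∀ i, red (p i) = red (q i)) (w : Msg) :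
    psi a b c p w = psi a b c q w := by
  choose v hv using fun i => exists_emb (p i) (q i) (h i)
  rw [← psi_add_emb a b c q v w]
  congr 1
  funext i
  exact hv i

theorem red_lft (u : Msg) (i : Fin 12) : red (lft u i) = u i := by
  simp [lft]

theorem psi_eq_phi (a b c : ℂ) {p : Fin 12 → ZMod 9} {u : Msg} (h : ∀ i, red (p i) = u i) (w : Msg) :
    psi a b c p w = phi a b c u w :=
  psi_congr a b c (fun i => by rw [h, red_lft]) w

theorem phi_neg (a b c : ℂ) (u w : Msg) : phi a b c (-u) (-w) = phi a b c u w := by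
  rw [← psi_eq_phi a b c (p := -lft u) (fun i => by simp [red_lft])]
  unfold phi psi
  simp only [enc9_neg, enc1_neg, kern_neg]

/-- A message modulo 9 is `u + 3 v` for unique messages `u`, `v` modulo 3. -/
def msgEquiv : Msg × Msg ≃ (Fin 12 → ZMod 9) := by
  have h : Function.Bijective (fun x : ZMod 3 × ZMod 3 => ((x.1.val : ZMod 9) + emb x.2)) := by
    decide +kernel
  exact (Equiv.arrowProdEquivProdArrow _ _ _).symm.trans (Equiv.arrowCongr (Equiv.refl _) (Equiv.ofBijective _ h))

theorem msgEquiv_apply (u v : Msg) : msgEquiv (u, v) = lft u + fun i => emb (v i) := rfl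

/-- The symmetrized weight enumerator as a sum over pairs of words modulo 3: Poisson summation over each
fibre of the reduction map. -/
theorem sum_fv (x0 x1 z : ℂ) :
    3 ^ 12 * ∑ p, ∏ j, fv x0 x1 z (enc9 p j)
      = ∑ u, ∑ w, phi (3 * x0) (z - x1) (z + 2 * x1) u w := by
  rw [← msgEquiv.sum_comp, Fintype.sum_prod_type, Finset.mul_sum]
  refine Finset.sum_congr rfl fun u _ => ?_
  have := poisson (fun j s => fv x0 x1 z (enc9 (lft u) j + emb s))
  simp only [msgEquiv_apply, enc9_add, enc9_emb]
  rw [← this]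
  simp only [kern_sum]
  rfl

/-! ### Weights -/

theorem wt_zero : wt 0 = 0 := by simp [wt, enc1_zero]

theorem eq_zero_of_wt {u : Msg} (h : wt u = 0) : u = 0 := by
  rw [wt, Finset.card_eq_zero, Finset.filter_eq_empty_iff] at h
  funext k
  rw [← enc1_pos u k]
  simpa using h (Finset.mem_univ (pos k))

theorem wt_le (u : Msg) : wt u ≤ 24 := by
  simpa [wt] using Finset.card_filter_le (Finset.univ : Finset (Fin 24)) fun j => enc1 u j ≠ 0

theorem prod_wt (x y : ℂ) (u : Msg) :
    ∏ j, (if enc1 u j = 0 then x else y) = x ^ (24 - wt u) * y ^ wt u := by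
  rw [Finset.prod_ite, Finset.prod_const, Finset.prod_const]
  have := Finset.card_filter_add_card_filter_not (s := (Finset.univ : Finset (Fin 24))) (fun j => enc1 u j = 0)
  simp only [Finset.card_univ, Fintype.card_fin] at this
  have h2 : (Finset.univ.filter fun j => enc1 u j = 0).card = 24 - wt u := by
    rw [wt]; simp only [ne_eq]; omega
  rw [h2]; rfl

/-- The MacWilliams identity for the self-dual code modulo 3. -/
theorem macwilliams (x y : ℂ) :
    ∑ u, (x + 2 * y) ^ (24 - wt u) * (x - y) ^ wt u = 3 ^ 12 * ∑ u, x ^ (24 - wt u) * y ^ wt u := by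
  have := poisson (fun _ s => if s = 0 then x else y)
  simp only [prod_wt] at this
  rw [← this]
  refine Finset.sum_congr rfl fun w _ => ?_
  rw [← prod_wt]
  refine Finset.prod_congr rfl fun j _ => ?_
  have h2 : ∀ s, (if s = 0 then x else y) * chi (s * enc1 w j)
        = y * chi (s * enc1 w j) + (if s = 0 then (x - y) * chi (s * enc1 w j) else 0) := by
      intro s
      split_ifs <;> ring
  simp only [h2]
  rw [Finset.sum_add_distrib, ← Finset.mul_sum, chi_orth, Finset.sum_ite_eq']
  simp only [Finset.mem_univ, if_true, zero_mul, chi_zero]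
  split_ifs <;> ring

/-- Weights are divisible by 3, as `x * x = 1` for nonzero `x` in `ℤ/3ℤ`. -/
theorem wt_mod3 (u : Msg) : wt u % 3 = 0 := by
  have h : ∀ x : ZMod 3, x * x = if x ≠ 0 then 1 else 0 := by decide
  have := enc1_self_orthogonal u u
  simp only [h] at this
  rw [Finset.sum_boole] at this
  rw [wt]
  exact Nat.mod_eq_zero_of_dvd ((ZMod.natCast_eq_zero_iff _ _).1 this)

theorem phi_zero_right (a b c : ℂ) (u : Msg) : phi a b c u 0 = c ^ (24 - wt u) * a ^ wt u := by
  rw [← prod_wt, phi, psi]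
  refine Finset.prod_congr rfl fun j _ => ?_
  rw [kern, red_enc9, enc1_zero]
  simp only [red_lft, if_true]

theorem phi_zero_left (a b c : ℂ) (w : Msg) : phi a b c 0 w = c ^ (24 - wt w) * b ^ wt w := by
  rw [← prod_wt, phi, psi]
  refine Finset.prod_congr rfl fun j _ => ?_
  have : enc9 (lft 0) j = 0 := by simp [enc9, lft]
  rw [this, kern]
  simp [t9, chi_zero]

theorem phi_eq_zero (a b c : ℂ) (u w : Msg) {j : Fin 24} (hu : enc1 u j ≠ 0) (hw : enc1 w j ≠ 0) :
    phi a b c u w = 0 := by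
  rw [phi, psi]
  refine Finset.prod_eq_zero (Finset.mem_univ j) ?_
  rw [kern, red_enc9]
  simp only [red_lft]
  rw [if_neg hu, if_neg hw]

theorem phi_eq_zero_of_wt (a b c : ℂ) (u w : Msg) (h : 24 < wt u + wt w) : phi a b c u w = 0 := by
  obtain ⟨j, hj⟩ : ∃ j, enc1 u j ≠ 0 ∧ enc1 w j ≠ 0 := by
    by_contra! hn
    have hd : Disjoint (Finset.univ.filter fun j => enc1 u j ≠ 0) (Finset.univ.filter fun j => enc1 w j ≠ 0) := by
      rw [Finset.disjoint_filter]
      intro j _ h1 h2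
      exact h2 (hn j h1)
    have := Finset.card_union_of_disjoint hd
    have h3 := Finset.card_le_univ ((Finset.univ.filter fun j => enc1 u j ≠ 0) ∪ (Finset.univ.filter fun j => enc1 w j ≠ 0))
    rw [this] at h3
    simp only [Fintype.card_fin] at h3
    unfold wt at h
    omega
  exact phi_eq_zero a b c u w hj.1 hj.2

/-! ### Encoding the terms as natural numbers -/

/-- The term of the sum encoded by a statistic. -/
def valS (a b c : ℂ) (s : ℕ) : ℂ :=
  if s / 1024 % 32 = 0 then
    c ^ (24 - s % 32 - s / 32 % 32) * a ^ (s % 32) * b ^ (s / 32 % 32) * omega ^ (s / 32768)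
  else 0

/-- The term of the sum encoded by a key. -/
def valK (a b c : ℂ) (k : ℕ) : ℂ :=
  if k = 4096 then 0
  else c ^ (24 - k % 32 - k / 32 % 32) * a ^ (k % 32) * b ^ (k / 32 % 32) * omega ^ (k / 1024)

theorem valK_keyc (a b c : ℂ) (cond : ℕ → ℕ → Bool) (s : ℕ) :
    valK a b c (keyc cond s) = if cond (s % 32) (s / 32 % 32) then valS a b c s else 0 := by
  unfold keyc valS
  cases h1 : cond (s % 32) (s / 32 % 32)
  · simp [valK]
  · by_cases h2 : s / 1024 % 32 = 0
    · rw [h2]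
      simp only [Bool.true_and, Nat.beq_refl, cond_true, if_true]
      have hlt : s % 1024 + 1024 * (s / 32768 % 3) ≠ 4096 := by omega
      have e1 : (s % 1024 + 1024 * (s / 32768 % 3)) % 32 = s % 32 := by omega
      have e2 : (s % 1024 + 1024 * (s / 32768 % 3)) / 32 % 32 = s / 32 % 32 := by omega
      have e3 : (s % 1024 + 1024 * (s / 32768 % 3)) / 1024 = s / 32768 % 3 := by omega
      rw [valK, if_neg hlt, e1, e2, e3, omega_pow_mod]
    · have : Nat.beq (s / 1024 % 32) 0 = false := by
        rw [← Bool.not_eq_true, Nat.beq_eq]; exact h2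
      rw [this]
      simp [valK, h2]

/-- Indicator of units of `ℤ/9ℤ`. -/
def nU (y : ZMod 9) : ℕ := if red y = 0 then 0 else 1

/-- Indicator of nonzero elements of `ℤ/3ℤ`. -/
def nW (β : ZMod 3) : ℕ := if β = 0 then 0 else 1

/-- The exponent of `omega` in `kern`. -/
def nE (y : ZMod 9) (β : ZMod 3) : ℕ :=
  if red y = 0 then (if β = 0 then 0 else (-(t9 y * β)).val) else 0

theorem cell_eq : ∀ (y : ZMod 9) (β : ZMod 3), cell y.val β.val
    = nU y + 32 * nW β + 1024 * (nU y * nW β) + 32768 * nE y β := by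
  decide +kernel

theorem kern_eq (a b c : ℂ) (y : ZMod 9) (β : ZMod 3) :
    kern a b c y β = if nU y * nW β = 0 then
      c ^ (1 - nU y - nW β) * a ^ nU y * b ^ nW β * omega ^ nE y β else 0 := by
  unfold kern nU nW nE chi
  split_ifs <;> simp_all

/-- No carries occur between the fields of the sum of the cells, so that it determines the product of the
kernels. -/
theorem prod_kern (a b c : ℂ) (y : Fin 24 → ZMod 9) (β : Fin 24 → ZMod 3) :
    ∏ j, kern a b c (y j) (β j) = valS a b c (∑ j, cell (y j).val (β j).val) := by
  have b1 : ∑ j, nU (y j) ≤ 24 := by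
    calc _ ≤ ∑ j : Fin 24, 1 := Finset.sum_le_sum fun j _ => by unfold nU; split_ifs <;> omega
      _ = 24 := by simp
  have b2 : ∑ j, nW (β j) ≤ 24 := by
    calc _ ≤ ∑ j : Fin 24, 1 := Finset.sum_le_sum fun j _ => by unfold nW; split_ifs <;> omega
      _ = 24 := by simp
  have b3 : ∑ j, nU (y j) * nW (β j) ≤ 24 := by
    calc _ ≤ ∑ j : Fin 24, 1 := Finset.sum_le_sum fun j _ => by
          unfold nW nU; split_ifs <;> omega
      _ = 24 := by simp
  simp only [cell_eq, Finset.sum_add_distrib, ← Finset.mul_sum]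
  set S1 := ∑ j, nU (y j) with hS1
  set S2 := ∑ j, nW (β j) with hS2
  set B := ∑ j, nU (y j) * nW (β j) with hB
  set E := ∑ j, nE (y j) (β j) with hE
  have e1 : (S1 + 32 * S2 + 1024 * B + 32768 * E) % 32 = S1 := by omega
  have e2 : (S1 + 32 * S2 + 1024 * B + 32768 * E) / 32 % 32 = S2 := by omega
  have e3 : (S1 + 32 * S2 + 1024 * B + 32768 * E) / 1024 % 32 = B := by omega
  have e4 : (S1 + 32 * S2 + 1024 * B + 32768 * E) / 32768 = E := by omega
  rw [valS, e1, e2, e3, e4]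
  simp only [kern_eq]
  split_ifs with h
  · have h' : ∀ j, nU (y j) * nW (β j) = 0 := by
      intro j
      exact (Finset.sum_eq_zero_iff.1 h) j (Finset.mem_univ j)
    have h3 : ∑ j, (1 - nU (y j) - nW (β j)) = 24 - S1 - S2 := by
      have : ∑ j, (1 - nU (y j) - nW (β j)) + S1 + S2 = 24 := by
        rw [hS1, hS2, ← Finset.sum_add_distrib, ← Finset.sum_add_distrib]
        calc _ = ∑ j : Fin 24, 1 := Finset.sum_congr rfl fun j _ => by
              have := h' j
              unfold nU nW at *
              split_ifs at * <;> omega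
          _ = 24 := by simp
      omega
    simp only [h', if_true]
    rw [Finset.prod_mul_distrib, Finset.prod_mul_distrib, Finset.prod_mul_distrib,
      Finset.prod_pow_eq_pow_sum, Finset.prod_pow_eq_pow_sum, Finset.prod_pow_eq_pow_sum,
      Finset.prod_pow_eq_pow_sum, h3]
  · obtain ⟨j, hj, hj'⟩ := Finset.exists_ne_zero_of_sum_ne_zero h
    exact Finset.prod_eq_zero hj (if_neg hj')

/-! ### Packed words -/

/-- The number with base-`65536` digits `d 0, …, d (n - 1)`. -/
def pk : ℕ → (ℕ → ℕ) → ℕ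
  | 0, _ => 0
  | n + 1, d => d 0 + 65536 * pk n fun j => d (j + 1)

theorem pk_add (n : ℕ) (d e : ℕ → ℕ) : pk n (fun j => d j + e j) = pk n d + pk n e := by
  induction n generalizing d e with
  | zero => rfl
  | succ n ih => simp only [pk, ih fun j => d (j + 1)]; ring

theorem pk_mul (n k : ℕ) (d : ℕ → ℕ) : pk n (fun j => k * d j) = k * pk n d := by
  induction n generalizing d with
  | zero => rfl
  | succ n ih => simp only [pk, ih fun j => d (j + 1)]; ring

theorem pk_sum {ι : Type*} (s : Finset ι) (n : ℕ) (f : ι → ℕ → ℕ) :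
    pk n (fun j => ∑ i ∈ s, f i j) = ∑ i ∈ s, pk n (f i) := by
  classical
  induction s using Finset.induction_on with
  | empty =>
    have := pk_mul n 0 (fun _ => 0)
    simpa using this
  | insert a s ha ih =>
    simp only [Finset.sum_insert ha]
    rw [pk_add, ih]

theorem stat_pk (n : ℕ) (d e : ℕ → ℕ) (hd : ∀ j, d j < 65536) (he : ∀ j, e j < 65536) :
    stat n (pk n d) (pk n e) = ∑ j ∈ Finset.range n, cell (d j % 9) (e j % 3) := by
  induction n generalizing d e with
  | zero => rfl
  | succ n ih =>
    rw [Finset.sum_range_succ', ← ih (fun j => d (j + 1)) (fun j => e (j + 1)) (fun j => hd _)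
      (fun j => he _)]
    have h : ∀ x y, x < 65536 → Nat.mod (x + 65536 * y) 65536 = x := fun x y hx => by
      change (x + 65536 * y) % 65536 = x; omega
    have h' : ∀ x y, x < 65536 → Nat.div (x + 65536 * y) 65536 = y := fun x y hx => by
      change (x + 65536 * y) / 65536 = y; omega
    simp only [stat, pk, h _ _ (hd 0), h _ _ (he 0), h' _ _ (hd 0), h' _ _ (he 0)]
    exact Nat.add_comm _ _

/-- The packed `i`-th row of the generator matrix. -/
def rowP (i : Fin 12) : ℕ := pk 24 (rowN i)

/-- The packed, unreduced word of a message with natural number digits. -/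
def packM (m : Fin 12 → ℕ) : ℕ := ∑ i, m i * rowP i

theorem rowN_le : ∀ (i : Fin 12) (j : ℕ), rowN i j ≤ 8 := by
  intro i j
  have h : ∀ l ∈ rowsL, ∀ x ∈ l, x ≤ 8 := by decide +kernel
  rw [rowN, List.getD_eq_getElem?_getD, List.getD_eq_getElem?_getD]
  cases h1 : rowsL[(i : ℕ)]? with
  | none => simp
  | some l =>
    cases h2 : l[j]? with
    | none => simp [h2]
    | some x => simpa [h2] using h l (List.mem_of_getElem? h1) x (List.mem_of_getElem? h2)

theorem packM_eq (m : Fin 12 → ℕ) : packM m = pk 24 fun j => ∑ i, m i * rowN i j := by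
  rw [pk_sum]
  simp only [pk_mul]
  rfl

/-- The bound that keeps digits of packed words from overflowing. -/
theorem digit_lt {m : Fin 12 → ℕ} (hm : ∀ i, m i ≤ 100) (j : ℕ) : ∑ i, m i * rowN i j < 65536 := by
  calc _ ≤ ∑ i : Fin 12, 100 * 8 := Finset.sum_le_sum fun i _ => Nat.mul_le_mul (hm i) (rowN_le i j)
    _ < _ := by simp

theorem psi_stat (a b c : ℂ) {m m' : Fin 12 → ℕ} (hm : ∀ i, m i ≤ 100) (hm' : ∀ i, m' i ≤ 100) :
    psi a b c (fun i => (m i : ZMod 9)) (fun i => (m' i : ZMod 3))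
      = valS a b c (stat 24 (packM m) (packM m')) := by
  rw [psi, prod_kern, packM_eq, packM_eq, stat_pk 24 _ _ (digit_lt hm) (digit_lt hm'),
    Finset.sum_range]
  refine congrArg (valS a b c) ?_
  refine Finset.sum_congr rfl fun j _ => ?_
  congr 1
  · rw [enc9, ← ZMod.val_natCast]; push_cast; rfl
  · rw [enc1, ← ZMod.val_natCast]; push_cast; rfl

theorem phi_stat (a b c : ℂ) {m m' : Fin 12 → ℕ} (hm : ∀ i, m i ≤ 100) (hm' : ∀ i, m' i ≤ 100)
    {u w : Msg} (hu : ∀ i, (m i : ZMod 3) = u i) (hw : ∀ i, (m' i : ZMod 3) = w i) :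
    phi a b c u w = valS a b c (stat 24 (packM m) (packM m')) := by
  rw [← psi_stat a b c hm hm', ← psi_eq_phi a b c (p := fun i => (m i : ZMod 9))
    (fun i => by rw [map_natCast, hu])]
  congr 1
  funext i
  exact (hw i).symm

/-- The statistic of a pair of packed words contains both weights; if `w = 0`, it is the weight of `u`. -/
theorem stat_wt {m m' : Fin 12 → ℕ} (hm : ∀ i, m i ≤ 100) (hm' : ∀ i, m' i ≤ 100)
    {u w : Msg} (hu : ∀ i, (m i : ZMod 3) = u i) (hw : ∀ i, (m' i : ZMod 3) = w i) :
    stat 24 (packM m) (packM m') % 32 = wt u ∧ stat 24 (packM m) (packM m') / 32 % 32 = wt w ∧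
    (w = 0 → stat 24 (packM m) (packM m') = wt u) := by
  have key : stat 24 (packM m) (packM m') = ∑ j : Fin 24,
      cell (enc9 (fun i => (m i : ZMod 9)) j).val (enc1 w j).val := by
    rw [packM_eq, packM_eq, stat_pk 24 _ _ (digit_lt hm) (digit_lt hm'), Finset.sum_range]
    refine Finset.sum_congr rfl fun j _ => ?_
    congr 1
    · rw [enc9, ← ZMod.val_natCast]; push_cast; rfl
    · rw [enc1, ← ZMod.val_natCast]; push_cast; simp only [hw]
  have hU : ∑ j : Fin 24, nU (enc9 (fun i => (m i : ZMod 9)) j) = wt u := by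
    unfold nU
    simp only [red_enc9, map_natCast, hu]
    rw [wt, Finset.card_filter]
    refine Finset.sum_congr rfl fun j _ => ?_
    split_ifs <;> simp_all
  have hW : ∑ j : Fin 24, nW (enc1 w j) = wt w := by
    unfold nW
    rw [wt, Finset.card_filter]
    refine Finset.sum_congr rfl fun j _ => ?_
    split_ifs <;> simp_all
  have b1 := wt_le u
  have b2 := wt_le w
  have b3 : ∑ j, nU (enc9 (fun i => (m i : ZMod 9)) j) * nW (enc1 w j) ≤ 24 := by
    calc _ ≤ ∑ j : Fin 24, 1 := Finset.sum_le_sum fun j _ => by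
          unfold nW nU; split_ifs <;> omega
      _ = 24 := by simp
  rw [key]
  simp only [cell_eq, Finset.sum_add_distrib, ← Finset.mul_sum, hU, hW]
  refine ⟨by omega, by omega, ?_⟩
  rintro rfl
  have h1 : ∀ j, nW (enc1 0 j) = 0 := by simp [enc1_zero, nW]
  have h2 : ∀ y j, nE y (enc1 0 j) = 0 := by simp [enc1_zero, nE]
  simp only [h1, h2, wt_zero]
  simp

/-! ### Evaluation of the sums by histograms -/

theorem countN_dropN (v : ℕ → ℂ) (k : ℕ) (l : List ℕ) :
    (l.map v).sum = countN k l * v k + ((dropN k l).map v).sum := by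
  induction l with
  | nil => simp [countN, dropN]
  | cons x xs ih =>
    by_cases h : x = k
    · subst h
      simp only [countN, dropN, Nat.beq_refl, cond_true, List.map_cons, List.sum_cons, ih]
      push_cast; ring
    · have : Nat.beq x k = false := by rw [← Bool.not_eq_true, Nat.beq_eq]; exact h
      simp only [countN, dropN, this, cond_false, List.map_cons, List.sum_cons, ih]
      push_cast; ring

theorem histOK_sum (v : ℕ → ℂ) (D : List (ℕ × ℕ)) (l : List ℕ) (h : histOK D l = true) :
    (l.map v).sum = (D.map fun x => (x.2 : ℂ) * v x.1).sum := by
  induction D generalizing l with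
  | nil => simp only [histOK, List.isEmpty_iff] at h; simp [h]
  | cons x D ih =>
    obtain ⟨k, c⟩ := x
    simp only [histOK, Bool.and_eq_true, Nat.beq_eq] at h
    rw [countN_dropN v k, ih _ h.2, ← h.1]
    simp

/-- Summing over `leaves` is summing over the messages supported on the flagged positions. -/
theorem sum_leaves (n : ℕ) (r : Fin n → ℕ) (fl : Fin n → Bool) (acc : ℕ) (f : ℕ → ℂ) :
    ((leaves (List.ofFn fun i => (r i, fl i)) acc).map f).sum
      = ∑ w : Fin n → ZMod 3, if ∀ i, fl i = false → w i = 0 then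
          f (acc + ∑ i, (w i).val * r i) else 0 := by
  induction n generalizing acc with
  | zero => simp [leaves]
  | succ n ih =>
    rw [List.ofFn_succ, ← (Fin.consEquiv fun _ => ZMod 3).sum_comp, Fintype.sum_prod_type, sum_zmod3]
    simp only [Fin.consEquiv_apply, Fin.forall_fin_succ, Fin.cons_zero, Fin.cons_succ,
      Fin.sum_univ_succ]
    have v1 : (1 : ZMod 3).val = 1 := rfl
    have v2 : (2 : ZMod 3).val = 2 := rfl
    have n1 : (1 : ZMod 3) ≠ 0 := by decide
    have n2 : (2 : ZMod 3) ≠ 0 := by decide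
    cases h : fl 0
    · simp only [leaves, n1, n2]
      rw [ih (fun i => r i.succ) (fun i => fl i.succ)]
      simp
    · simp only [leaves, List.map_append, List.sum_append]
      rw [ih (fun i => r i.succ) (fun i => fl i.succ), ih (fun i => r i.succ) (fun i => fl i.succ),
        ih (fun i => r i.succ) (fun i => fl i.succ)]
      simp [v1, v2, add_assoc]

/-- The digits of a message as natural numbers. -/
def nat (u : Msg) : Fin 12 → ℕ := fun i => (u i).val

theorem nat_le (u : Msg) (i : Fin 12) : nat u i ≤ 100 := by
  have := ZMod.val_lt (u i)
  unfold nat; omega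

theorem nat_cast (u : Msg) (i : Fin 12) : ((nat u i : ℕ) : ZMod 3) = u i := by
  simp [nat]

/-- The contribution of the pairs `(u, w)` with `wt u = 9` and `w ≠ 0`, for fixed `u`. -/
def T3 (a b c : ℂ) (u : Msg) : ℂ := ∑ w, if c3 (wt u) (wt w) then phi a b c u w else 0

/-- The contribution of the pairs `(u, w)` with `wt w = 9` and `wt u ∉ {0, 9}`, for fixed `w`. -/
def T4 (a b c : ℂ) (w : Msg) : ℂ := ∑ u, if c4 (wt u) (wt w) then phi a b c u w else 0

/-- The `i`-th representative of the words of weight 9. -/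
def rep9 (i : Fin 8) : Msg := fun k => (((reps9.getD i []).getD k 0 : ℕ) : ZMod 3)

/-- The message positions at which `u` vanishes; a word with support disjoint from that of `u` can be
nonzero only at these. -/
def flag (u : Msg) (i : Fin 12) : Bool := decide (u i = 0)

theorem T3_eq (a b c : ℂ) (u : Msg) : T3 a b c u =
    ((leaves (List.ofFn fun i => (rowP i, flag u i)) 0).map
      fun w => valK a b c (keyc c3 (stat 24 (packM (nat u)) w))).sum := by
  rw [sum_leaves, T3]
  refine Finset.sum_congr rfl fun w _ => ?_
  have hp : 0 + ∑ i, (w i).val * rowP i = packM (nat w) := by rw [zero_add]; rfl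
  have hs := stat_wt (nat_le u) (nat_le w) (nat_cast u) (nat_cast w)
  rw [hp, valK_keyc, ← phi_stat a b c (nat_le u) (nat_le w) (nat_cast u) (nat_cast w), hs.1, hs.2.1]
  by_cases h : ∀ i, flag u i = false → w i = 0
  · rw [if_pos h]
  · rw [if_neg h]
    push Not at h
    obtain ⟨i, hi, hw⟩ := h
    have : phi a b c u w = 0 := phi_eq_zero a b c u w (j := pos i)
      (by rw [enc1_pos]; simpa [flag] using hi) (by rwa [enc1_pos])
    rw [this, ite_self]

theorem T4_eq (a b c : ℂ) (w : Msg) : T4 a b c w =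
    ((leaves (List.ofFn fun i => (rowP i, flag w i)) 0).map
      fun u => valK a b c (keyc c4 (stat 24 u (packM (nat w))))).sum := by
  rw [sum_leaves, T4]
  refine Finset.sum_congr rfl fun u _ => ?_
  have hp : 0 + ∑ i, (u i).val * rowP i = packM (nat u) := by rw [zero_add]; rfl
  have hs := stat_wt (nat_le u) (nat_le w) (nat_cast u) (nat_cast w)
  rw [hp, valK_keyc, ← phi_stat a b c (nat_le u) (nat_le w) (nat_cast u) (nat_cast w), hs.1, hs.2.1]
  by_cases h : ∀ i, flag w i = false → u i = 0
  · rw [if_pos h]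
  · rw [if_neg h]
    push Not at h
    obtain ⟨i, hi, hw⟩ := h
    have : phi a b c u w = 0 := phi_eq_zero a b c u w (j := pos i)
      (by rwa [enc1_pos]) (by rw [enc1_pos]; simpa [flag] using hi)
    rw [this, ite_self]

theorem check9_all : (List.zipWith check9 reps9 [1, 1, 163, 1, 163, 163, 163, 1]).all id = true := by
  decide +kernel

theorem link9 : ∀ i : Fin 8, dotP (reps9.getD i []) rowPs = packM (nat (rep9 i)) ∧
    List.zipWith (fun r x => (r, Nat.beq x 0)) rowPs (reps9.getD i [])
      = List.ofFn fun k => (rowP k, flag (rep9 i) k) := by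
  decide +kernel

/-- The contributions of the words of weight 9, computed for the eight representatives. -/
theorem T_rep9 (a b c : ℂ) (i : Fin 8) :
    T3 a b c (rep9 i) = a ^ 9 * (-4 * b ^ 9 * c ^ 6 + 3 * b ^ 12 * c ^ 3) ∧
    T4 a b c (rep9 i) = 3 * a ^ 12 * b ^ 9 * c ^ 3 := by
  obtain ⟨k, hk⟩ : ∃ k, check9 (reps9.getD i []) k = true := by
    have h := check9_all
    simp only [reps9, List.zipWith_cons_cons, List.zipWith_nil_left, List.all_cons, List.all_nil, id,
      Bool.and_eq_true] at h
    obtain ⟨h0, h1, h2, h3, h4, h5, h6, h7, -⟩ := h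
    fin_cases i
    exacts [⟨_, h0⟩, ⟨_, h1⟩, ⟨_, h2⟩, ⟨_, h3⟩, ⟨_, h4⟩, ⟨_, h5⟩, ⟨_, h6⟩, ⟨_, h7⟩]
  obtain ⟨e1, e2⟩ := link9 i
  simp only [check9, Bool.and_eq_true, e1, e2] at hk
  have h3 := histOK_sum (valK a b c) _ _ hk.1
  have h4 := histOK_sum (valK a b c) _ _ hk.2
  simp only [List.map_map, Function.comp_def] at h3 h4
  rw [T3_eq, T4_eq, h3, h4]
  refine ⟨?_, ?_⟩
  · simp only [List.map_cons, List.map_nil, List.sum_cons, List.sum_nil, valK]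
    norm_num
    linear_combination (18 * c ^ 6 * a ^ 9 * b ^ 9 + 9 * c ^ 3 * a ^ 9 * b ^ 12) * omega_sum
  · simp only [List.map_cons, List.map_nil, List.sum_cons, List.sum_nil, valK]
    norm_num
    linear_combination (9 * c ^ 3 * a ^ 12 * b ^ 9) * omega_sum

/-! ### The weight distribution of the code modulo 3 -/

/-- Correctness of the enumeration `enum3`. -/
theorem enum3_spec (n : ℕ) (r : Fin n → ℕ) (b acc : ℕ) (h : enum3 (List.ofFn r) b acc = true)
    (w : Fin n → ZMod 3) (hw : (Finset.univ.filter fun i => w i ≠ 0).card ≤ b) :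
    stat 24 (acc + ∑ i, (w i).val * r i) 0 ≠ 3 ∧ stat 24 (acc + ∑ i, (w i).val * r i) 0 ≠ 6 := by
  have base : ∀ s : ℕ, (!Nat.beq s 3 && !Nat.beq s 6) = true → s ≠ 3 ∧ s ≠ 6 := by
    intro s hs
    constructor <;> rintro rfl <;> simp at hs
  induction n generalizing b acc with
  | zero =>
    simp only [Finset.univ_eq_empty, Finset.sum_empty, add_zero]
    exact base _ (by simpa [enum3] using h)
  | succ n ih =>
    rw [List.ofFn_succ] at h
    rw [Fin.sum_univ_succ]
    have hc : (Finset.univ.filter fun i => w i ≠ 0).card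
        = (if w 0 ≠ 0 then 1 else 0) + (Finset.univ.filter fun i : Fin n => w i.succ ≠ 0).card := by
      rw [Finset.card_filter, Finset.card_filter, Fin.sum_univ_succ]
    cases b with
    | zero =>
      have h0 : ∀ i, w i = 0 := by
        simpa using hw
      simp only [h0, ZMod.val_zero, zero_mul, Finset.sum_const_zero, add_zero]
      exact base _ (by simpa [enum3] using h)
    | succ b =>
      simp only [enum3, Bool.and_eq_true] at h
      obtain ⟨g0, g1, g2⟩ := h
      have h3 : w 0 = 0 ∨ w 0 = 1 ∨ w 0 = 2 := by
        generalize w 0 = x; revert x; decide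
      rw [hc] at hw
      rw [← add_assoc]
      rcases h3 with h3 | h3 | h3
      · have := ih (fun i => r i.succ) (b + 1) acc g0 (fun i => w i.succ) (by omega)
        simpa [h3] using this
      · have := ih (fun i => r i.succ) b _ g1 (fun i => w i.succ)
          (by rw [h3, if_pos (by decide)] at hw; omega)
        rw [h3, show (1 : ZMod 3).val = 1 from rfl, one_mul]; exact this
      · have := ih (fun i => r i.succ) b _ g2 (fun i => w i.succ)
          (by rw [h3, if_pos (by decide)] at hw; omega)
        rw [h3, show (2 : ZMod 3).val = 2 from rfl]; exact this

theorem stat_zero_right (m : Fin 12 → ℕ) (hm : ∀ i, m i ≤ 100) (u : Msg) (hu : ∀ i, (m i : ZMod 3) = u i) :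
    stat 24 (packM m) 0 = wt u := by
  have := (stat_wt hm (m' := fun _ => 0) (w := 0) (by simp) hu (by simp)).2.2 rfl
  simpa [packM] using this

/-- Coefficients of a generator matrix systematic in the last 12 coordinates: since `A Aᵀ = -I`, the inverse
of `A` modulo 3 is `-Aᵀ = 2 Aᵀ`. -/
def rowR (i k : Fin 12) : ℕ := 2 * rowN k (12 + i) % 3

theorem enum3_left : enum3 (List.ofFn rowP) 3 0 = true := by decide +kernel

theorem enum3_right : enum3 (List.ofFn fun i => packM (rowR i)) 3 0 = true := by decide +kernel

/-- A word of weight at most 6 has at most three nonzero coordinates in the first or in the second half,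
so it is found by one of the two enumerations. -/
theorem wt_ne_small (u : Msg) : wt u ≠ 3 ∧ wt u ≠ 6 := by
  by_cases hl : (Finset.univ.filter fun i => u i ≠ 0).card ≤ 3
  · have := enum3_spec 12 rowP 3 0 enum3_left u hl
    rw [zero_add] at this
    rwa [← stat_zero_right (nat u) (nat_le u) u (nat_cast u)]
  let hi (k : Fin 12) : Fin 24 := Fin.natAdd 12 k
  by_cases hr : (Finset.univ.filter fun i => enc1 u (hi i) ≠ 0).card ≤ 3
  · have := enum3_spec 12 _ 3 0 enum3_right (fun i => enc1 u (hi i)) hr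
    have hp : 0 + ∑ i, (enc1 u (hi i)).val * packM (rowR i)
        = packM fun k => ∑ i, (enc1 u (hi i)).val * rowR i k := by
      simp only [packM, Finset.sum_mul, zero_add, Finset.mul_sum]
      rw [Finset.sum_comm]
      simp only [mul_assoc]
    rw [hp] at this
    rw [stat_zero_right _ _ u] at this
    · exact this
    · intro k
      have hA : ∀ l k : Fin 12, ∑ i : Fin 12, (rowN l (hi i) : ZMod 3) * (rowR i k : ZMod 3)
          = if l = k then 1 else 0 := by decide +kernel
      push_cast
      simp only [ZMod.natCast_val, ZMod.cast_id', id_eq, enc1, Finset.sum_mul]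
      rw [Finset.sum_comm]
      simp only [mul_assoc, ← Finset.mul_sum, hA]
      simp
    · intro k
      calc _ ≤ ∑ i : Fin 12, 2 * 2 := Finset.sum_le_sum fun i _ => Nat.mul_le_mul
            (by have := ZMod.val_lt (enc1 u (hi i)); omega) (by unfold rowR; omega)
        _ ≤ 100 := by simp
  have : wt u = (Finset.univ.filter fun i => u i ≠ 0).card
      + (Finset.univ.filter fun i => enc1 u (hi i) ≠ 0).card := by
    rw [wt, Finset.card_filter, Finset.card_filter, Finset.card_filter]
    rw [show (∑ i : Fin 24, if enc1 u i ≠ 0 then 1 else 0) = _ from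
      Fin.sum_univ_add (a := 12) (b := 12) (fun i : Fin 24 => if enc1 u i ≠ 0 then 1 else 0)]
    refine congrArg (· + ∑ k : Fin 12, if enc1 u (hi k) ≠ 0 then 1 else 0) ?_
    refine Finset.sum_congr rfl fun k _ => ?_
    rw [show enc1 u (Fin.castAdd 12 k) = u k from enc1_pos u k]
  omega

theorem wt_mem (u : Msg) : wt u ∈ ({0, 9, 12, 15, 18, 21, 24} : Finset ℕ) := by
  have h1 := wt_mod3 u
  have h2 := wt_ne_small u
  have h3 := wt_le u
  simp only [Finset.mem_insert, Finset.mem_singleton]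
  omega

/-- The number of words of weight `k` in the code modulo 3. -/
def numWt (k : ℕ) : ℕ := (Finset.univ.filter fun u => wt u = k).card

theorem sum_wt (f : ℕ → ℂ) : ∑ u, f (wt u) = f 0 + numWt 9 * f 9 + numWt 12 * f 12
    + numWt 15 * f 15 + numWt 18 * f 18 + numWt 21 * f 21 + numWt 24 * f 24 := by
  have h0 : numWt 0 = 1 := by
    rw [numWt, Finset.card_eq_one]
    refine ⟨0, ?_⟩
    ext u
    simp only [Finset.mem_filter, Finset.mem_univ, true_and, Finset.mem_singleton]
    exact ⟨eq_zero_of_wt, fun h => h ▸ wt_zero⟩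
  rw [← Finset.sum_fiberwise_of_maps_to (fun u _ => wt_mem u)]
  have : ∀ k, ∑ u with wt u = k, f (wt u) = numWt k * f k := by
    intro k
    rw [Finset.sum_congr rfl (g := fun _ => f k) (fun u hu => by rw [(Finset.mem_filter.1 hu).2]),
      Finset.sum_const, nsmul_eq_mul, numWt]
  simp only [this]
  rw [Finset.sum_insert (by decide), Finset.sum_insert (by decide), Finset.sum_insert (by decide),
    Finset.sum_insert (by decide), Finset.sum_insert (by decide), Finset.sum_insert (by decide),
    Finset.sum_singleton, h0]
  push_cast
  ring

/-- The MacWilliams identity, at six points, determines the six unknown numbers of words. -/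
theorem solve_macwilliams (n9 n12 n15 n18 n21 n24 : ℕ)
    (h : ∀ x y : ℂ, ((x + 2 * y) ^ (24 - 0) * (x - y) ^ 0
        + n9 * ((x + 2 * y) ^ (24 - 9) * (x - y) ^ 9) + n12 * ((x + 2 * y) ^ (24 - 12) * (x - y) ^ 12)
        + n15 * ((x + 2 * y) ^ (24 - 15) * (x - y) ^ 15) + n18 * ((x + 2 * y) ^ (24 - 18) * (x - y) ^ 18)
        + n21 * ((x + 2 * y) ^ (24 - 21) * (x - y) ^ 21) + n24 * ((x + 2 * y) ^ (24 - 24) * (x - y) ^ 24))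
      = 3 ^ 12 * (x ^ (24 - 0) * y ^ 0 + n9 * (x ^ (24 - 9) * y ^ 9) + n12 * (x ^ (24 - 12) * y ^ 12)
        + n15 * (x ^ (24 - 15) * y ^ 15) + n18 * (x ^ (24 - 18) * y ^ 18) + n21 * (x ^ (24 - 21) * y ^ 21)
        + n24 * (x ^ (24 - 24) * y ^ 24))) :
    n9 = 4048 ∧ n12 = 61824 ∧ n15 = 242880 ∧ n18 = 198352 ∧ n21 = 24288 ∧ n24 = 48 := by
  have key : ∀ x y : ℤ, ((x + 2 * y) ^ (24 - 0) * (x - y) ^ 0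
        + n9 * ((x + 2 * y) ^ (24 - 9) * (x - y) ^ 9) + n12 * ((x + 2 * y) ^ (24 - 12) * (x - y) ^ 12)
        + n15 * ((x + 2 * y) ^ (24 - 15) * (x - y) ^ 15) + n18 * ((x + 2 * y) ^ (24 - 18) * (x - y) ^ 18)
        + n21 * ((x + 2 * y) ^ (24 - 21) * (x - y) ^ 21) + n24 * ((x + 2 * y) ^ (24 - 24) * (x - y) ^ 24))
      = 3 ^ 12 * (x ^ (24 - 0) * y ^ 0 + n9 * (x ^ (24 - 9) * y ^ 9) + n12 * (x ^ (24 - 12) * y ^ 12)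
        + n15 * (x ^ (24 - 15) * y ^ 15) + n18 * (x ^ (24 - 18) * y ^ 18) + n21 * (x ^ (24 - 21) * y ^ 21)
        + n24 * (x ^ (24 - 24) * y ^ 24)) := fun x y => by exact_mod_cast h x y
  -- six points at which the resulting linear system is nonsingular
  have h1 := key 1 0
  have h2 := key 0 1
  have h3 := key 1 2
  have h4 := key 1 3
  have h5 := key (-3) 1
  have h6 := key 4 1
  norm_num at h1 h2 h3 h4 h5 h6
  refine ⟨?_, ?_, ?_, ?_, ?_, ?_⟩ <;> zify <;> linarith

theorem numWt_eq : numWt 9 = 4048 ∧ numWt 12 = 61824 ∧ numWt 15 = 242880 ∧ numWt 18 = 198352 ∧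
    numWt 21 = 24288 ∧ numWt 24 = 48 := by
  refine solve_macwilliams _ _ _ _ _ _ fun x y => ?_
  rw [← sum_wt (fun k => (x + 2 * y) ^ (24 - k) * (x - y) ^ k),
    ← sum_wt (fun k => x ^ (24 - k) * y ^ k)]
  exact macwilliams x y

/-! ### Automorphisms of the code -/

/-- The coordinate permutation `τ` is an automorphism of the code modulo 9: the permuted word is the
codeword of its own first 12 coordinates. -/
def IsAut (τ : Equiv.Perm (Fin 24)) : Prop :=
  ∀ p j, enc9 p (τ j) = enc9 (fun k => enc9 p (τ (pos k))) j

theorem IsAut.mul {τ τ' : Equiv.Perm (Fin 24)} (h : IsAut τ) (h' : IsAut τ') : IsAut (τ * τ') := by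
  intro p j
  simp only [Equiv.Perm.mul_apply]
  rw [h p (τ' j), h' _ j]
  congr 1
  funext k
  rw [← h p]

theorem IsAut.one : IsAut 1 := by
  intro p j
  simp [enc9_pos]

theorem IsAut.pow {τ : Equiv.Perm (Fin 24)} (h : IsAut τ) (n : ℕ) : IsAut (τ ^ n) := by
  induction n with
  | zero => exact IsAut.one
  | succ n ih => rw [pow_succ]; exact ih.mul h

theorem IsAut.of_rows {τ : Equiv.Perm (Fin 24)}
    (h : ∀ (i : Fin 12) (j : Fin 24), (rowN i (τ j) : ZMod 9)
      = ∑ k : Fin 12, (rowN i (τ (pos k)) : ZMod 9) * (rowN k j : ZMod 9)) : IsAut τ := by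
  intro p j
  simp only [enc9, Finset.sum_mul]
  rw [Finset.sum_comm]
  simp only [mul_assoc, ← Finset.mul_sum, ← h]

/-- The translation `j ↦ j + 1` modulo 23, fixing the coordinate `∞ = 23`. -/
def shiftFun (j : Fin 24) : Fin 24 := if j = 23 then 23 else ⟨(j + 1) % 23, by omega⟩

/-- The multiplication `j ↦ 3 j` modulo 23, fixing the coordinate `∞ = 23`. -/
def multFun (j : Fin 24) : Fin 24 := if j = 23 then 23 else ⟨3 * j % 23, by omega⟩

/-- `shiftFun` as a permutation. -/
def shift : Equiv.Perm (Fin 24) := Equiv.ofBijective shiftFun (by decide +kernel)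

/-- `multFun` as a permutation. -/
def mult : Equiv.Perm (Fin 24) := Equiv.ofBijective multFun (by decide +kernel)

theorem shift_aut : IsAut shift := by
  refine IsAut.of_rows fun i j => ?_
  change (rowN i (shiftFun j) : ZMod 9)
      = ∑ k : Fin 12, (rowN i (shiftFun (pos k)) : ZMod 9) * (rowN k j : ZMod 9)
  revert i j; decide +kernel

theorem mult_aut : IsAut mult := by
  refine IsAut.of_rows fun i j => ?_
  change (rowN i (multFun j) : ZMod 9)
      = ∑ k : Fin 12, (rowN i (multFun (pos k)) : ZMod 9) * (rowN k j : ZMod 9)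
  revert i j; decide +kernel

theorem shift_pow (k : ℕ) (j : Fin 24) :
    ((shift ^ k) j : ℕ) = if (j : ℕ) = 23 then 23 else ((j : ℕ) + k) % 23 := by
  induction k with
  | zero => simp only [pow_zero, Equiv.Perm.one_apply]; split_ifs <;> omega
  | succ k ih =>
    rw [pow_succ', Equiv.Perm.mul_apply]
    change (shiftFun ((shift ^ k) j) : ℕ) = _
    unfold shiftFun
    simp only [Fin.ext_iff, ih, apply_ite Fin.val]
    simp only [show ((23 : Fin 24) : ℕ) = 23 from rfl]
    split_ifs <;> omega

theorem mult_pow (k : ℕ) (j : Fin 24) :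
    ((mult ^ k) j : ℕ) = if (j : ℕ) = 23 then 23 else (3 ^ k * (j : ℕ)) % 23 := by
  induction k with
  | zero => simp only [pow_zero, Equiv.Perm.one_apply, one_mul]; split_ifs <;> omega
  | succ k ih =>
    rw [pow_succ', Equiv.Perm.mul_apply]
    change (multFun ((mult ^ k) j) : ℕ) = _
    unfold multFun
    simp only [Fin.ext_iff, ih, apply_ite Fin.val]
    simp only [show ((23 : Fin 24) : ℕ) = 23 from rfl]
    have : 3 ^ (k + 1) * (j : ℕ) = 3 * (3 ^ k * j) := by ring
    rw [this]
    generalize 3 ^ k * (j : ℕ) = x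
    split_ifs <;> omega

/-- The action of an automorphism on messages modulo 3. -/
def act (τ : Equiv.Perm (Fin 24)) (u : Msg) : Msg := fun k => enc1 u (τ (pos k))

theorem enc1_act {τ : Equiv.Perm (Fin 24)} (h : IsAut τ) (u : Msg) (j : Fin 24) :
    enc1 (act τ u) j = enc1 u (τ j) := by
  have := congrArg red (h (lft u) j)
  simp only [red_enc9, red_lft] at this
  exact this.symm

theorem wt_act {τ : Equiv.Perm (Fin 24)} (h : IsAut τ) (u : Msg) : wt (act τ u) = wt u := by
  unfold wt
  rw [Finset.card_filter, Finset.card_filter]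
  simp only [enc1_act h]
  exact Equiv.sum_comp τ fun j => if enc1 u j ≠ 0 then 1 else 0

theorem wt_neg (u : Msg) : wt (-u) = wt u := by
  unfold wt
  simp only [enc1_neg, neg_ne_zero]

theorem act_bijective {τ : Equiv.Perm (Fin 24)} (h : IsAut τ) : Function.Bijective (act τ) := by
  refine (Finite.injective_iff_bijective).1 fun u u' huu => ?_
  funext k
  have := enc1_act h u (τ⁻¹ (pos k))
  rw [huu, enc1_act h u'] at this
  simpa [enc1_pos] using this.symm

theorem phi_act (a b c : ℂ) {τ : Equiv.Perm (Fin 24)} (h : IsAut τ) (u w : Msg) :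
    phi a b c (act τ u) (act τ w) = phi a b c u w := by
  rw [← psi_eq_phi a b c (p := fun k => enc9 (lft u) (τ (pos k)))]
  · unfold phi psi
    simp only [← h (lft u), enc1_act h]
    exact Equiv.prod_comp τ fun j => kern a b c (enc9 (lft u) j) (enc1 w j)
  · intro k
    rw [red_enc9]
    simp only [red_lft]
    rfl

theorem T3_act (a b c : ℂ) {τ : Equiv.Perm (Fin 24)} (h : IsAut τ) (u : Msg) :
    T3 a b c (act τ u) = T3 a b c u := by
  unfold T3
  rw [← Equiv.sum_comp (Equiv.ofBijective _ (act_bijective h))]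
  simp only [Equiv.ofBijective_apply, wt_act h, phi_act a b c h]

theorem T4_act (a b c : ℂ) {τ : Equiv.Perm (Fin 24)} (h : IsAut τ) (u : Msg) :
    T4 a b c (act τ u) = T4 a b c u := by
  unfold T4
  rw [← Equiv.sum_comp (Equiv.ofBijective _ (act_bijective h))]
  simp only [Equiv.ofBijective_apply, wt_act h, phi_act a b c h]

theorem T3_neg (a b c : ℂ) (u : Msg) : T3 a b c (-u) = T3 a b c u := by
  unfold T3
  rw [← Equiv.sum_comp (Equiv.neg Msg)]
  simp only [Equiv.neg_apply, wt_neg, phi_neg]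

theorem T4_neg (a b c : ℂ) (u : Msg) : T4 a b c (-u) = T4 a b c u := by
  unfold T4
  rw [← Equiv.sum_comp (Equiv.neg Msg)]
  simp only [Equiv.neg_apply, wt_neg, phi_neg]

/-! ### Words of weight 9 -/

/-- The affine map `j ↦ 3 ^ (n / 23 % 11) * j + n % 23`. -/
def perm9 (n : ℕ) : Equiv.Perm (Fin 24) := shift ^ (n % 23) * mult ^ (n / 23 % 11)

theorem perm9_aut (n : ℕ) : IsAut (perm9 n) := (shift_aut.pow _).mul (mult_aut.pow _)

/-- The `n`-th word of weight 9. -/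
def word9 (n : Fin 2024) : Msg := act (perm9 n) (rep9 ⟨n / 253, by omega⟩)

/-- The support of a word as a bit mask. -/
def mask (u : Msg) : ℕ := ∑ j : Fin 24, 2 ^ (j : ℕ) * if enc1 u j = 0 then 0 else 1

theorem affMask_eq (s q k n : ℕ) :
    affMask s q k n = ∑ j ∈ Finset.range n, 2 ^ j * bitAt s ((q * j + k) % 23) := by
  induction n with
  | zero => rfl
  | succ n ih => rw [Finset.sum_range_succ, ← ih]; rfl

theorem bitAt_rep9 : ∀ (i : Fin 8) (j : Fin 24),
    bitAt (suppList.getD i 0) j = if enc1 (rep9 i) j = 0 then 0 else 1 := by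
  decide +kernel

theorem wt_rep9 : ∀ i : Fin 8, wt (rep9 i) = 9 := by
  decide +kernel

theorem mask_word9 (n : Fin 2024) : mask (word9 n) = maskOf n := by
  unfold mask word9
  simp only [enc1_act (perm9_aut n), ← bitAt_rep9]
  rw [Fin.sum_univ_castSucc]
  have e : maskOf n = affMask (suppList.getD ((n : ℕ) / 253) 0) (3 ^ ((n : ℕ) / 23 % 11) % 23)
      ((n : ℕ) % 23) 23
    + 8388608 * bitAt (suppList.getD ((n : ℕ) / 253) 0) 23 := rfl
  rw [e, affMask_eq, Finset.sum_range]
  have hv : ∀ j : Fin 24, (perm9 n j : ℕ)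
      = if (j : ℕ) = 23 then 23 else (3 ^ ((n : ℕ) / 23 % 11) % 23 * (j : ℕ) + (n : ℕ) % 23) % 23 := by
    intro j
    rw [perm9, Equiv.Perm.mul_apply, shift_pow, mult_pow]
    have : (3 ^ ((n : ℕ) / 23 % 11) % 23 * (j : ℕ) + (n : ℕ) % 23) % 23
        = (3 ^ ((n : ℕ) / 23 % 11) * (j : ℕ) % 23 + (n : ℕ) % 23) % 23 := by
      have h1 := Nat.mod_mul_mod (3 ^ ((n : ℕ) / 23 % 11)) (j : ℕ) 23
      omega
    rw [this]
    split_ifs <;> omega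
  simp only [hv]
  refine congrArg₂ (· + ·) (Finset.sum_congr rfl fun j _ => ?_) rfl
  rw [if_neg]
  · rfl
  · simp only [Fin.val_castSucc]; omega

theorem nodup_of_nodupBits (b : ℕ) (l : List ℕ) (h : nodupBits b l = true) : l.Nodup := by
  induction b, l using nodupBits.induct with
  | case1 => exact List.nodup_nil
  | case2 => exact List.nodup_singleton _
  | case3 => simp [nodupBits] at h
  | case4 b x y l ih1 ih2 =>
    simp only [nodupBits, Bool.and_eq_true] at h
    have h1 := ih1 h.1
    have h2 := ih2 h.2
    rw [List.nodup_iff_count_le_one] at *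
    intro z
    cases hz : Nat.beq (bitAt z b) 0
    · rw [← List.count_filter (p := fun n => !Nat.beq (bitAt n b) 0) (by simp [hz])]; exact h2 z
    · rw [← List.count_filter (p := fun n => Nat.beq (bitAt n b) 0) (by simp [hz])]; exact h1 z

theorem maskOf_nodup : nodupBits 24 ((List.range 2024).map maskOf) = true := by decide +kernel

theorem mask_neg (u : Msg) : mask (-u) = mask u := by
  unfold mask
  simp only [enc1_neg, neg_eq_zero]

/-- The 2024 words `word9 n` have distinct supports, so with their negatives they are all 4048 words of
weight 9. -/
theorem exists_word9 {u : Msg} (hu : wt u = 9) : ∃ n, u = word9 n ∨ u = -word9 n := by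
  let F : Bool × Fin 2024 → {u : Msg // wt u = 9} := fun x =>
    ⟨bif x.1 then -word9 x.2 else word9 x.2, by
      cases x.1 <;> simp [wt_neg, word9, wt_act (perm9_aut _), wt_rep9]⟩
  have hw : ∀ n, wt (word9 n) = 9 := fun n => (F (false, n)).2
  have hinj : Function.Injective F := by
    rintro ⟨b, n⟩ ⟨b', n'⟩ h
    have h1 := congrArg Subtype.val h
    simp only [F] at h1
    have h2 : maskOf n = maskOf n' := by
      have := congrArg mask h1
      rw [← mask_word9, ← mask_word9]
      cases b <;> cases b' <;> simpa [mask_neg] using this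
    have h3 : n = n' := by
      have := List.inj_on_of_nodup_map (nodup_of_nodupBits _ _ maskOf_nodup)
        (List.mem_range.2 n.2) (List.mem_range.2 n'.2) h2
      exact Fin.ext this
    subst h3
    have h4 : word9 n ≠ -word9 n := by
      intro h
      have hz : word9 n = 0 := by
        funext k
        have hk := congrFun h k
        simp only [Pi.neg_apply] at hk
        have : ∀ x : ZMod 3, x = -x → x = 0 := by decide
        exact this _ hk
      have := hw n
      rw [hz, wt_zero] at this
      omega
    cases b <;> cases b'
    · rfl
    · exact absurd h1 h4
    · exact absurd h1.symm h4
    · rfl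
  have hcard : Fintype.card (Bool × Fin 2024) = Fintype.card {u : Msg // wt u = 9} := by
    rw [Fintype.card_subtype]
    have : (Finset.univ.filter fun u : Msg => wt u = 9).card = 4048 := numWt_eq.1
    rw [this, Fintype.card_prod, Fintype.card_bool, Fintype.card_fin]
  obtain ⟨⟨b, n⟩, hx⟩ := ((Fintype.bijective_iff_injective_and_card F).2 ⟨hinj, hcard⟩).2 ⟨u, hu⟩
  have := congrArg Subtype.val hx
  refine ⟨n, ?_⟩
  cases b
  · left; exact this.symm
  · right; exact this.symm

theorem T_of_wt9 (a b c : ℂ) {u : Msg} (hu : wt u = 9) :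
    T3 a b c u = a ^ 9 * (-4 * b ^ 9 * c ^ 6 + 3 * b ^ 12 * c ^ 3) ∧
    T4 a b c u = 3 * a ^ 12 * b ^ 9 * c ^ 3 := by
  obtain ⟨n, rfl | rfl⟩ := exists_word9 hu
  · rw [word9, T3_act a b c (perm9_aut n), T4_act a b c (perm9_aut n)]
    exact T_rep9 a b c _
  · rw [T3_neg, T4_neg, word9, T3_act a b c (perm9_aut n), T4_act a b c (perm9_aut n)]
    exact T_rep9 a b c _

/-! ### Words of weight 24 and pairs of words of weight 12 -/

/-- Message digits of the `n`-th word of full weight; the last 24 words are `8 = -1` times the first 24. -/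
def m24 (n : Fin 48) (k : Fin 12) : ℕ :=
  if (n : ℕ) < 24 then (reps24.getD n []).getD k 0 else 8 * (reps24.getD (n - 24) []).getD k 0

/-- The `n`-th word of full weight. -/
def word24 (n : Fin 48) : Msg := fun k => (m24 n k : ZMod 3)

theorem m24_le : ∀ n k, m24 n k ≤ 16 := by decide +kernel

theorem wt_word24 : ∀ n, wt (word24 n) = 24 := by decide +kernel

theorem word24_injective : Function.Injective word24 := by decide +kernel

/-- There are exactly 48 words of full weight, so the listed ones are all. -/
theorem exists_word24 {u : Msg} (hu : wt u = 24) : u ∈ Set.range word24 := by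
  let F : Fin 48 → {u : Msg // wt u = 24} := fun n => ⟨word24 n, wt_word24 n⟩
  have hinj : Function.Injective F := fun n n' h => word24_injective (congrArg Subtype.val h)
  have hcard : Fintype.card (Fin 48) = Fintype.card {u : Msg // wt u = 24} := by
    rw [Fintype.card_subtype]
    have : (Finset.univ.filter fun u : Msg => wt u = 24).card = 48 := numWt_eq.2.2.2.2.2
    rw [this, Fintype.card_fin]
  obtain ⟨n, hx⟩ := ((Fintype.bijective_iff_injective_and_card F).2 ⟨hinj, hcard⟩).2 ⟨u, hu⟩
  exact ⟨n, congrArg Subtype.val hx⟩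

theorem check24_ok : check24 = true := by decide +kernel

theorem link24 : reps24s = List.ofFn fun n => packM (m24 n) := by decide +kernel

/-- The bijection `(h, k) ↦ (h + k, h - k)`. -/
def sumDiff : Msg × Msg ≃ Msg × Msg where
  toFun x := (x.1 + x.2, x.1 - x.2)
  invFun x := (-(x.1 + x.2), x.2 - x.1)
  left_inv x := by
    have h : ∀ a b : ZMod 3, -(a + b + (a - b)) = a ∧ a - b - (a + b) = b := by decide
    exact Prod.ext (funext fun i => (h _ _).1) (funext fun i => (h _ _).2)
  right_inv x := by
    have h : ∀ a b : ZMod 3, -(a + b) + (b - a) = a ∧ -(a + b) - (b - a) = b := by decide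
    exact Prod.ext (funext fun i => (h _ _).1) (funext fun i => (h _ _).2)

theorem wt_eq_24 {u : Msg} (h : ∀ j, enc1 u j ≠ 0) : wt u = 24 := by
  rw [wt, Finset.filter_true_of_mem fun j _ => h j, Finset.card_univ, Fintype.card_fin]

theorem c5_spec {i j : ℕ} (h : c5 i j = true) : i = 12 ∧ j = 12 := by
  simpa [c5, Nat.beq_eq] using h

/-- If `h + k` and `h - k` have weight 12 and disjoint supports, then each coordinate of exactly one of
them vanishes, so that `h` and `k` are nonzero everywhere. -/
theorem wt24_of_c5 (a b c : ℂ) (h k : Msg)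
    (hne : (if c5 (wt (h + k)) (wt (h - k)) then phi a b c (h + k) (h - k) else 0) ≠ 0) :
    wt h = 24 ∧ wt k = 24 := by
  have hc : c5 (wt (h + k)) (wt (h - k)) = true := by
    by_contra hc
    rw [if_neg hc] at hne
    exact hne rfl
  rw [if_pos hc] at hne
  obtain ⟨h1, h2⟩ := c5_spec hc
  have hd : ∀ j, enc1 (h + k) j = 0 ∨ enc1 (h - k) j = 0 := by
    intro j
    by_contra hj
    push Not at hj
    exact hne (phi_eq_zero a b c _ _ hj.1 hj.2)
  have hu : (Finset.univ.filter fun j => enc1 (h + k) j ≠ 0)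
      ∪ (Finset.univ.filter fun j => enc1 (h - k) j ≠ 0) = Finset.univ := by
    rw [← Finset.card_eq_iff_eq_univ, Finset.card_union_of_disjoint]
    · change wt (h + k) + wt (h - k) = _
      rw [h1, h2, Fintype.card_fin]
    · rw [Finset.disjoint_filter]
      intro j _ g1 g2
      rcases hd j with g | g
      · exact g1 g
      · exact g2 g
  have hj : ∀ j, enc1 h j ≠ 0 ∧ enc1 k j ≠ 0 := by
    intro j
    have h3 := hd j
    have h4 := Finset.mem_univ j
    rw [← hu, Finset.mem_union, Finset.mem_filter, Finset.mem_filter] at h4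
    simp only [Finset.mem_univ, true_and] at h4
    rw [enc1_add, enc1_sub] at h3 h4
    revert h3 h4
    generalize enc1 h j = x
    generalize enc1 k j = y
    revert x y
    decide
  exact ⟨wt_eq_24 fun j => (hj j).1, wt_eq_24 fun j => (hj j).2⟩

/-- The pairs of words of weight 12 contribute `-1104 a ^ 12 b ^ 12`. -/
theorem sum_c5 (a b c : ℂ) :
    ∑ u, ∑ w, (if c5 (wt u) (wt w) then phi a b c u w else 0) = -1104 * a ^ 12 * b ^ 12 := by
  rw [← Fintype.sum_prod_type' (f := fun u w => if c5 (wt u) (wt w) then phi a b c u w else 0),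
    ← Equiv.sum_comp sumDiff]
  change ∑ x : Msg × Msg, (if c5 (wt (x.1 + x.2)) (wt (x.1 - x.2)) then
    phi a b c (x.1 + x.2) (x.1 - x.2) else 0) = _
  have hck := check24_ok
  rw [check24, link24] at hck
  have hs := histOK_sum (valK a b c) _ _ hck
  rw [List.map_flatMap, List.flatMap_def, List.sum_flatten, List.map_map, List.map_ofFn,
    List.sum_ofFn] at hs
  simp only [Function.comp_def, List.map_ofFn, List.sum_ofFn] at hs
  rw [← Fintype.sum_prod_type' (f := fun n n' => valK a b c
    (keyc c5 (stat 24 (packM (m24 n) + packM (m24 n')) (packM (m24 n) + 2 * packM (m24 n')))))] at hs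
  have hinj : Function.Injective (Prod.map word24 word24) :=
    word24_injective.prodMap word24_injective
  rw [← Fintype.sum_of_injective (Prod.map word24 word24) hinj _ _ ?_ ?_, hs]
  · simp only [List.map_cons, List.map_nil, List.sum_cons, List.sum_nil, valK]
    norm_num
    linear_combination (1104 * a ^ 12 * b ^ 12) * omega_sum
  · rintro ⟨h, k⟩ hx
    by_contra hne
    obtain ⟨h1, h2⟩ := wt24_of_c5 a b c h k hne
    obtain ⟨n, rfl⟩ := exists_word24 h1
    obtain ⟨n', rfl⟩ := exists_word24 h2
    exact hx ⟨(n, n'), rfl⟩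
  · rintro ⟨n, n'⟩
    simp only [Prod.map_fst, Prod.map_snd]
    have p1 : packM (m24 n) + packM (m24 n') = packM fun i => m24 n i + m24 n' i := by
      simp only [packM, add_mul, Finset.sum_add_distrib]
    have p2 : packM (m24 n) + 2 * packM (m24 n') = packM fun i => m24 n i + 2 * m24 n' i := by
      simp only [packM, add_mul, Finset.sum_add_distrib, Finset.mul_sum, mul_assoc]
    have l1 : ∀ i, m24 n i + m24 n' i ≤ 100 := fun i => by
      have := m24_le n i; have := m24_le n' i; omega
    have l2 : ∀ i, m24 n i + 2 * m24 n' i ≤ 100 := fun i => by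
      have := m24_le n i; have := m24_le n' i; omega
    have u1 : ∀ i, ((m24 n i + m24 n' i : ℕ) : ZMod 3) = (word24 n + word24 n') i := fun i => by
      push_cast; rfl
    have u2 : ∀ i, ((m24 n i + 2 * m24 n' i : ℕ) : ZMod 3) = (word24 n - word24 n') i := fun i => by
      have h : ∀ x y : ZMod 3, x + 2 * y = x - y := by decide
      push_cast; exact h _ _
    have hw := stat_wt l1 l2 u1 u2
    rw [p1, p2, valK_keyc, hw.1, hw.2.1, phi_stat a b c l1 l2 u1 u2]

/-! ### The sum over all pairs -/

theorem wt_eq_zero_iff (u : Msg) : wt u = 0 ↔ u = 0 := ⟨eq_zero_of_wt, fun h => h ▸ wt_zero⟩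

/-- Only pairs with `wt u + wt w ≤ 24` contribute. As nonzero weights are at least 9, either one word is
zero, or one of them has weight 9, or both have weight 12. -/
theorem phi_split (a b c : ℂ) (u w : Msg) :
    phi a b c u w = (if w = 0 then phi a b c u w else 0)
      + ((if u = 0 then phi a b c u w else 0) - (if u = 0 then (if w = 0 then phi a b c u w else 0) else 0))
      + (if c3 (wt u) (wt w) then phi a b c u w else 0)
      + (if c4 (wt u) (wt w) then phi a b c u w else 0)
      + (if c5 (wt u) (wt w) then phi a b c u w else 0) := by
  have hu := wt_mem u
  have hw := wt_mem w
  simp only [Finset.mem_insert, Finset.mem_singleton] at hu hw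
  simp only [← wt_eq_zero_iff]
  by_cases hbig : 24 < wt u + wt w
  · rw [phi_eq_zero_of_wt a b c u w hbig]; simp
  -- the remaining pairs of weights are checked one by one
  · rcases hu with hu | hu | hu | hu | hu | hu | hu <;>
      rcases hw with hw | hw | hw | hw | hw | hw | hw <;>
      first
        | (exfalso; omega)
        | (rw [hu, hw]; simp [c3, c4, c5])

theorem sum_phi (a b c : ℂ) : ∑ u, ∑ w, phi a b c u w =
    c ^ 24
    + (4048 * a ^ 9 * c ^ 15 + 61824 * a ^ 12 * c ^ 12 + 242880 * a ^ 15 * c ^ 9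
      + 198352 * a ^ 18 * c ^ 6 + 24288 * a ^ 21 * c ^ 3 + 48 * a ^ 24)
    + (4048 * b ^ 9 * c ^ 15 + 61824 * b ^ 12 * c ^ 12 + 242880 * b ^ 15 * c ^ 9
      + 198352 * b ^ 18 * c ^ 6 + 24288 * b ^ 21 * c ^ 3 + 48 * b ^ 24)
    + (-(16192 * c ^ 6 * a ^ 9 * b ^ 9) + 12144 * c ^ 3 * a ^ 9 * b ^ 12
      + 12144 * c ^ 3 * a ^ 12 * b ^ 9 - 1104 * a ^ 12 * b ^ 12) := by
  obtain ⟨n9, n12, n15, n18, n21, n24⟩ := numWt_eq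
  have hW : ∀ x : ℂ, ∑ u, c ^ (24 - wt u) * x ^ wt u = c ^ 24 + (4048 * x ^ 9 * c ^ 15
      + 61824 * x ^ 12 * c ^ 12 + 242880 * x ^ 15 * c ^ 9
      + 198352 * x ^ 18 * c ^ 6 + 24288 * x ^ 21 * c ^ 3 + 48 * x ^ 24) := by
    intro x
    rw [sum_wt fun k => c ^ (24 - k) * x ^ k, n9, n12, n15, n18, n21, n24]
    norm_num
    ring
  have hC : ∀ K : ℂ, ∑ u, (if wt u = 9 then K else 0) = 4048 * K := by
    intro K
    rw [← Finset.sum_filter, Finset.sum_const, nsmul_eq_mul]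
    change (numWt 9 : ℂ) * K = _
    rw [n9]; norm_num
  have s1 : ∑ u, ∑ w, (if w = 0 then phi a b c u w else 0) = ∑ u, c ^ (24 - wt u) * a ^ wt u := by
    refine Finset.sum_congr rfl fun u _ => ?_
    rw [Finset.sum_ite_eq', if_pos (Finset.mem_univ _), phi_zero_right]
  have s2 : ∑ u, ∑ w, (if u = 0 then phi a b c u w else 0) = ∑ w, c ^ (24 - wt w) * b ^ wt w := by
    rw [Finset.sum_comm]
    refine Finset.sum_congr rfl fun w _ => ?_
    rw [Finset.sum_ite_eq', if_pos (Finset.mem_univ _), phi_zero_left]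
  have s0 : ∑ u, ∑ w, (if u = 0 then (if w = 0 then phi a b c u w else 0) else 0) = c ^ 24 := by
    rw [Finset.sum_comm]
    simp only [Finset.sum_ite_eq', Finset.mem_univ, if_true]
    rw [phi_zero_left, wt_zero]; simp
  have s3 : ∑ u, ∑ w, (if c3 (wt u) (wt w) then phi a b c u w else 0)
      = 4048 * (a ^ 9 * (-4 * b ^ 9 * c ^ 6 + 3 * b ^ 12 * c ^ 3)) := by
    rw [← hC]
    refine Finset.sum_congr rfl fun u _ => ?_
    split_ifs with h
    · exact (T_of_wt9 a b c h).1
    · refine Finset.sum_eq_zero fun w _ => if_neg ?_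
      simp [c3, Nat.beq_eq, h]
  have s4 : ∑ u, ∑ w, (if c4 (wt u) (wt w) then phi a b c u w else 0)
      = 4048 * (3 * a ^ 12 * b ^ 9 * c ^ 3) := by
    rw [← hC, Finset.sum_comm]
    refine Finset.sum_congr rfl fun w _ => ?_
    split_ifs with h
    · exact (T_of_wt9 a b c h).2
    · refine Finset.sum_eq_zero fun u _ => if_neg ?_
      simp [c4, Nat.beq_eq, h]
  rw [Finset.sum_congr rfl fun u _ => Finset.sum_congr rfl fun w _ => phi_split a b c u w]
  simp only [Finset.sum_add_distrib, Finset.sum_sub_distrib]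
  rw [s1, s2, s0, s3, s4, sum_c5, hW, hW]
  ring

/-! ### Factors of `X ^ 23 - 1` modulo 9 -/

/-- Coefficients of the second degree-11 factor of `X ^ 23 - 1` modulo 9: the negated reversal of `gCoef`. -/
def tCoef : List ℕ := [8, 5, 8, 4, 7, 0, 5, 0, 5, 3, 6, 1]

/-- The polynomial modulo 9 with the given coefficients (those of `X ^ i` for `i < 12`). -/
def polyOf (l : List ℕ) : Polynomial (ZMod 9) :=
  ∑ i ∈ Finset.range 12, Polynomial.C ((l.getD i 0 : ℕ) : ZMod 9) * Polynomial.X ^ i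

theorem coeff_polyOf (l : List ℕ) (hl : l.length ≤ 12) (n : ℕ) :
    (polyOf l).coeff n = ((l.getD n 0 : ℕ) : ZMod 9) := by
  simp only [polyOf, Polynomial.finsetSum_coeff, Polynomial.coeff_C_mul_X_pow]
  rw [Finset.sum_ite_eq]
  split_ifs with h
  · rfl
  · rw [Finset.mem_range, not_lt] at h
    rw [List.getD_eq_default _ _ (hl.trans h)]; simp

theorem polyOf_monic (l : List ℕ) (hl : l.length ≤ 12) (h : l.getD 11 0 = 1) :
    (polyOf l).Monic ∧ (polyOf l).natDegree = 11 := by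
  have h1 : (polyOf l).coeff 11 = 1 := by rw [coeff_polyOf l hl, h]; simp
  have h2 : (polyOf l).natDegree ≤ 11 := by
    rw [Polynomial.natDegree_le_iff_coeff_eq_zero]
    intro N hN
    rw [coeff_polyOf l hl, List.getD_eq_default _ _ (by omega)]; simp
  have h3 := Polynomial.monic_of_natDegree_le_of_coeff_eq_one 11 h2 h1
  refine ⟨h3, le_antisymm h2 (Polynomial.le_natDegree_of_ne_zero ?_)⟩
  rw [h1]; decide

theorem factor_X_pow_sub_one :
    (Polynomial.X - 1) * (polyOf gCoef * polyOf tCoef) = Polynomial.X ^ 23 - 1 := by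
  have h9 : (9 : Polynomial (ZMod 9)) = 0 := by
    have : (9 : Polynomial (ZMod 9)) = Polynomial.C (9 : ZMod 9) := rfl
    rw [this, show (9 : ZMod 9) = 0 by decide, map_zero]
  simp only [polyOf, gCoef, tCoef, Finset.sum_range_succ, Finset.sum_range_zero, List.getD_cons_zero,
    List.getD_cons_succ, Nat.cast_ofNat, Nat.cast_one, Nat.cast_zero, map_ofNat, map_one, map_zero]
  -- the multiplier is the quotient by 9 of the difference of the two sides, computed over `ℤ`
  linear_combination ((-7) * Polynomial.X ^ 0 + (-7) * Polynomial.X ^ 2 + (1) * Polynomial.X ^ 3 + (-2) * Polynomial.X ^ 4 + (3) * Polynomial.X ^ 5 + (-1) * Polynomial.X ^ 6 + (3) * Polynomial.X ^ 7 + (-5) * Polynomial.X ^ 8 + (-4) * Polynomial.X ^ 10 + (2) * Polynomial.X ^ 11 + (3) * Polynomial.X ^ 12 + (4) * Polynomial.X ^ 13 + (2) * Polynomial.X ^ 14 + (3) * Polynomial.X ^ 15 + (-1) * Polynomial.X ^ 16 + (2) * Polynomial.X ^ 17 + (-2) * Polynomial.X ^ 18 + (3) * Polynomial.X ^ 19 +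 (2) * Polynomial.X ^ 21 + (1) * Polynomial.X ^ 22) * h9

/-! ### Cyclic codes as row spaces -/

/-- If `g` is a monic divisor of degree 11 of `X ^ 23 - 1`, the ideal generated by `g` modulo `X ^ 23 - 1` is
spanned by the shifts `X ^ k * g` with `k < 12`. -/
theorem mem_cyclic {g h : Polynomial (ZMod 9)} (hg : g.Monic) (hgd : g.natDegree = 11)
    (hgh : g * h = Polynomial.X ^ 23 - 1) (a : Fin 23 → ZMod 9) :
    (∃ f : Polynomial (ZMod 9), ∀ j : Fin 23,
      a j = ((f * g) %ₘ (Polynomial.X ^ 23 - 1)).coeff (j : ℕ)) ↔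
    ∃ q : Fin 12 → ZMod 9, ∀ j : Fin 23,
      a j = ∑ k, q k * if (k : ℕ) ≤ j then g.coeff (j - k) else 0 := by
  have : Nontrivial (ZMod 9) := ⟨0, 1, by decide⟩
  have hX : (Polynomial.X ^ 23 - 1 : Polynomial (ZMod 9)).Monic := by
    simpa using Polynomial.monic_X_pow_sub_C (1 : ZMod 9) (n := 23) (by norm_num)
  have hXd : (Polynomial.X ^ 23 - 1 : Polynomial (ZMod 9)).natDegree = 23 := by
    simpa using Polynomial.natDegree_X_pow_sub_C (n := 23) (r := (1 : ZMod 9))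
  have hh : h.Monic := hg.of_mul_monic_left (hgh ▸ hX)
  have hhd : h.natDegree = 12 := by
    have := hg.natDegree_mul hh
    rw [hgh, hXd, hgd] at this
    omega
  have key : ∀ f : Polynomial (ZMod 9),
      (f * g) %ₘ (Polynomial.X ^ 23 - 1) = (f %ₘ h) * g := by
    intro f
    refine (Polynomial.div_modByMonic_unique (f /ₘ h) _ hX ⟨?_, ?_⟩).2
    · have := Polynomial.modByMonic_add_div f h
      rw [← hgh]
      linear_combination g * this
    · rw [← hgh, mul_comm g h, hg.degree_mul, hg.degree_mul]
      have := Polynomial.degree_modByMonic_lt f hh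
      rw [Polynomial.degree_eq_natDegree hg.ne_zero]
      exact WithBot.add_lt_add_right (WithBot.natCast_ne_bot _) this
  have hc : ∀ r : Polynomial (ZMod 9), r.degree < 12 → ∀ j : ℕ, (r * g).coeff j =
      ∑ k : Fin 12, r.coeff k * if (k : ℕ) ≤ j then g.coeff (j - k) else 0 := by
    intro r hr j
    have hr' : r.natDegree < 12 := by
      by_cases h0 : r = 0
      · simp [h0]
      · exact (Polynomial.natDegree_lt_iff_degree_lt h0).2 hr
    conv_lhs => rw [Polynomial.as_sum_range_C_mul_X_pow' r hr']
    rw [Finset.sum_mul, Polynomial.finsetSum_coeff, Finset.sum_range]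
    refine Finset.sum_congr rfl fun k _ => ?_
    rw [mul_assoc, Polynomial.coeff_C_mul, Polynomial.coeff_X_pow_mul']
  have hmod : ∀ f : Polynomial (ZMod 9), (f %ₘ h).degree < 12 := by
    intro f
    have := Polynomial.degree_modByMonic_lt f hh
    rwa [Polynomial.degree_eq_natDegree hh.ne_zero, hhd] at this
  constructor
  · rintro ⟨f, hf⟩
    refine ⟨fun k => (f %ₘ h).coeff k, fun j => ?_⟩
    rw [hf j, key, hc _ (hmod f)]
  · rintro ⟨q, hq⟩
    let f : Polynomial (ZMod 9) := ∑ k : Fin 12, Polynomial.C (q k) * Polynomial.X ^ (k : ℕ)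
    have hfd : f.degree < 12 := by
      have := Polynomial.degree_sum_fin_lt q
      exact_mod_cast this
    have hfc : ∀ k : Fin 12, f.coeff k = q k := by
      intro k
      simp only [f, Polynomial.finsetSum_coeff, Polynomial.coeff_C_mul_X_pow]
      simp [Fin.val_inj]
    have hfm : f %ₘ h = f := by
      rw [Polynomial.modByMonic_eq_self_iff hh, Polynomial.degree_eq_natDegree hh.ne_zero, hhd]
      exact hfd
    refine ⟨f, fun j => ?_⟩
    rw [hq j, key, hfm, hc f hfd]
    simp only [hfc]

/-! ### Hensel lifts -/

theorem nilp_of_map_zero {d : Polynomial (ZMod 9)} (hd : d.map red = 0) : IsNilpotent d := by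
  rw [Polynomial.isNilpotent_iff]
  intro i
  have h := congrArg (fun r => Polynomial.coeff r i) hd
  simp only [Polynomial.coeff_map, Polynomial.coeff_zero] at h
  have : ∀ y : ZMod 9, red y = 0 → y ^ 2 = 0 := by decide +kernel
  exact ⟨2, this _ h⟩

/-- Coprimality lifts from `ℤ/3ℤ` to `ℤ/9ℤ`, since the kernel of reduction is nilpotent. -/
theorem isCoprime_lift {a b : Polynomial (ZMod 9)}
    (h : IsCoprime (a.map red) (b.map red)) : IsCoprime a b := by
  obtain ⟨u, v, huv⟩ := h
  have hs : Function.Surjective red := by decide +kernel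
  obtain ⟨u, rfl⟩ := Polynomial.map_surjective red hs u
  obtain ⟨v, rfl⟩ := Polynomial.map_surjective red hs v
  have hn : IsNilpotent (u * a + v * b - 1) := by
    apply nilp_of_map_zero
    simp [huv]
  have hu : IsUnit (u * a + v * b) := by simpa using hn.isUnit_one_add
  obtain ⟨w, hw⟩ := hu.exists_right_inv
  exact ⟨w * u, w * v, by linear_combination hw⟩

/-- Complementary factors of `X ^ 23 - 1` are coprime, as `X ^ 23 - 1` is separable modulo 3. -/
theorem coprime_of_mul_eq {a b : Polynomial (ZMod 9)} (h : a * b = Polynomial.X ^ 23 - 1) :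
    IsCoprime a b := by
  apply isCoprime_lift
  have hsep : (Polynomial.X ^ 23 - 1 : Polynomial (ZMod 3)).Separable :=
    Polynomial.X_pow_sub_one_separable_iff.2 (by decide)
  have h2 := congrArg (Polynomial.map red) h
  simp only [Polynomial.map_mul, Polynomial.map_sub, Polynomial.map_pow, Polynomial.map_X,
    Polynomial.map_one] at h2
  rw [← h2] at hsep
  exact hsep.isCoprime

/-- Uniqueness of the Hensel lift of a factor of `X ^ 23 - 1`. -/
theorem hensel_unique {a b c d : Polynomial (ZMod 9)} (hab : a * b = Polynomial.X ^ 23 - 1)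
    (hcd : c * d = Polynomial.X ^ 23 - 1) (ha : a.Monic) (hc : c.Monic)
    (hdeg : a.natDegree = c.natDegree) (hred : a.map red = c.map red) : a = c := by
  -- `a` is coprime to the cofactor `d` of `c`, since `a` and `c` agree modulo 3
  have hcop : IsCoprime a d := by
    apply isCoprime_lift
    rw [hred]
    obtain ⟨u, v, huv⟩ := coprime_of_mul_eq hcd
    exact ⟨u.map red, v.map red, by
      rw [← Polynomial.map_mul, ← Polynomial.map_mul, ← Polynomial.map_add, huv,
        Polynomial.map_one]⟩
  have hdvd : a ∣ c := hcop.dvd_of_dvd_mul_right ⟨b, by rw [hcd, hab]⟩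
  exact (Polynomial.eq_of_monic_of_dvd_of_natDegree_le ha hc hdvd hdeg.ge).symm

theorem monic_dvd_eq {a b : Polynomial (ZMod 3)} (ha : a.Monic) (hb : b.Monic)
    (hd : b.natDegree ≤ a.natDegree) (h : a ∣ b) : a = b :=
  (Polynomial.eq_of_monic_of_dvd_of_natDegree_le ha hb h hd).symm

theorem red_gen {g : Polynomial (ZMod 3)} (hg : IsQRFactor 3 g) :
    g = (polyOf gCoef).map red ∨ g = (polyOf tCoef).map red := by
  obtain ⟨hm, hd, hi, hdvd⟩ := hg
  have hG := polyOf_monic gCoef (by decide) (by decide)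
  have hT := polyOf_monic tCoef (by decide) (by decide)
  have e := congrArg (Polynomial.map red) factor_X_pow_sub_one
  simp only [Polynomial.map_mul, Polynomial.map_sub, Polynomial.map_pow, Polynomial.map_X,
    Polynomial.map_one] at e
  rw [← e] at hdvd
  rcases hi.prime.dvd_or_dvd hdvd with h | h
  · exfalso
    have h1 : (Polynomial.X - 1 : Polynomial (ZMod 3)).natDegree = 1 := by
      simpa using Polynomial.natDegree_X_sub_C (1 : ZMod 3)
    have h0 : (Polynomial.X - 1 : Polynomial (ZMod 3)) ≠ 0 := by
      intro h0; rw [h0] at h1; simp at h1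
    have := Polynomial.natDegree_le_of_dvd h h0
    omega
  · rcases hi.prime.dvd_or_dvd h with h | h
    · left
      exact monic_dvd_eq hm (hG.1.map red) (by rw [hG.1.natDegree_map, hG.2, hd]) h
    · right
      exact monic_dvd_eq hm (hT.1.map red) (by rw [hT.1.natDegree_map, hT.2, hd]) h

theorem lifted_gen {g : Polynomial (ZMod 3)} (hg : IsQRFactor 3 g)
    {g2 : Polynomial (ZMod 9)} (hm : g2.Monic) (hd : g2.natDegree = 11)
    (hdvd : g2 ∣ Polynomial.X ^ 23 - 1) (hr : g2.map red = g) :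
    g2 = polyOf gCoef ∨ g2 = polyOf tCoef := by
  obtain ⟨H, hH⟩ := hdvd
  have hG := polyOf_monic gCoef (by decide) (by decide)
  have hT := polyOf_monic tCoef (by decide) (by decide)
  refine (red_gen hg).imp (fun h => ?_) fun h => ?_
  · exact hensel_unique hH.symm (d := (Polynomial.X - 1) * polyOf tCoef)
      (by rw [← factor_X_pow_sub_one]; ring) hm hG.1 (hd.trans hG.2.symm) (hr.trans h)
  · exact hensel_unique hH.symm (d := (Polynomial.X - 1) * polyOf gCoef)
      (by rw [← factor_X_pow_sub_one]; ring) hm hT.1 (hd.trans hT.2.symm) (hr.trans h)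

/-! ### Identification of the code -/

/-- Coefficient `j` of `X ^ k` times the polynomial with coefficients `l`. -/
def shiftRow (l : List ℕ) (k : Fin 12) (j : ℕ) : ZMod 9 :=
  if (k : ℕ) ≤ j then ((l.getD (j - k) 0 : ℕ) : ZMod 9) else 0

/-- The word of `shiftRow`, extended by the parity coordinate. -/
def extRow (l : List ℕ) (k : Fin 12) (j : Fin 24) : ZMod 9 :=
  if (j : ℕ) < 23 then shiftRow l k j else -∑ i : Fin 23, shiftRow l k i

theorem mem_iff_extRow (l : List ℕ) (hl : l.length ≤ 12) (hl1 : l.getD 11 0 = 1)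
    {h : Polynomial (ZMod 9)} (hgh : polyOf l * h = Polynomial.X ^ 23 - 1)
    (c : Fin 24 → ZMod 9) :
    ((∃ f : Polynomial (ZMod 9), ∀ j : Fin 23,
          c (Fin.castSucc j) = ((f * polyOf l) %ₘ (Polynomial.X ^ 23 - 1)).coeff (j : ℕ)) ∧
        c (Fin.last 23) = - ∑ j : Fin 23, c (Fin.castSucc j)) ↔
    ∃ q : Fin 12 → ZMod 9, ∀ j, c j = ∑ k, q k * extRow l k j := by
  obtain ⟨hm, hd⟩ := polyOf_monic l hl hl1
  rw [mem_cyclic hm hd hgh (fun j => c (Fin.castSucc j))]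
  simp only [coeff_polyOf l hl]
  have e1 : ∀ k (j : Fin 23), extRow l k (Fin.castSucc j) = shiftRow l k j := by
    intro k j
    rw [extRow, if_pos (by simp [j.2])]; rfl
  have e2 : ∀ k, extRow l k (Fin.last 23) = -∑ i : Fin 23, shiftRow l k i := by
    intro k
    rw [extRow, if_neg (by simp)]
  have e3 : ∀ q : Fin 12 → ZMod 9, -∑ j : Fin 23, ∑ k, q k * shiftRow l k j
      = ∑ k, q k * extRow l k (Fin.last 23) := by
    intro q
    rw [Finset.sum_comm, ← Finset.sum_neg_distrib]
    refine Finset.sum_congr rfl fun k _ => ?_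
    rw [e2, ← Finset.mul_sum, mul_neg]
  constructor
  · rintro ⟨⟨q, hq⟩, h23⟩
    refine ⟨q, fun j => Fin.lastCases ?_ (fun i => ?_) j⟩
    · rw [h23, ← e3]
      exact congrArg _ (Finset.sum_congr rfl fun i _ => hq i)
    · rw [hq i]
      exact Finset.sum_congr rfl fun k _ => by rw [e1]; rfl
  · rintro ⟨q, hq⟩
    have hq' : ∀ j : Fin 23, c (Fin.castSucc j) = ∑ k, q k * shiftRow l k j := by
      intro j
      rw [hq]
      exact Finset.sum_congr rfl fun k _ => by rw [e1]
    refine ⟨⟨q, hq'⟩, ?_⟩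
    rw [hq, ← e3]
    exact congrArg _ (Finset.sum_congr rfl fun i _ => (hq' i).symm)

/-- Two generator matrices, one with permuted columns, expressed through each other generate equivalent
codes. -/
theorem row_space_iff {r : Fin 12 → Fin 24 → ZMod 9} {ρ : Equiv.Perm (Fin 24)}
    {A B : Fin 12 → Fin 12 → ZMod 9}
    (hA : ∀ k j, r k (ρ j) = ∑ i, A k i * (rowN i j : ZMod 9))
    (hB : ∀ (i : Fin 12) (j : Fin 24), (rowN i j : ZMod 9) = ∑ k, B i k * r k (ρ j))
    (c : Fin 24 → ZMod 9) :
    (∃ q : Fin 12 → ZMod 9, ∀ j, c j = ∑ k, q k * r k j) ↔ ∃ p, ∀ j, c (ρ j) = enc9 p j := by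
  constructor
  · rintro ⟨q, hq⟩
    refine ⟨fun i => ∑ k, q k * A k i, fun j => ?_⟩
    simp only [hq, hA, enc9, Finset.mul_sum, Finset.sum_mul]
    rw [Finset.sum_comm]
    simp only [mul_assoc]
  · rintro ⟨p, hp⟩
    refine ⟨fun k => ∑ i, p i * B i k, fun j => ?_⟩
    obtain ⟨j, rfl⟩ := ρ.surjective j
    rw [hp]
    simp only [enc9, hB, Finset.mul_sum, Finset.sum_mul]
    rw [Finset.sum_comm]
    simp only [mul_assoc]

/-- The reflection `j ↦ 22 - j` of the first 23 coordinates. -/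
def revFun (j : Fin 24) : Fin 24 := if (j : ℕ) < 23 then ⟨22 - j, by omega⟩ else j

/-- `revFun` as a permutation. -/
def revPerm : Equiv.Perm (Fin 24) :=
  ⟨revFun, revFun, by decide +kernel, by decide +kernel⟩

/-- Coefficients expressing row `i` of the systematic matrix through the shifts of `gCoef`. -/
def vRow (i k : Fin 12) : ZMod 9 := shiftRow vCoef i k

theorem rows_g (c : Fin 24 → ZMod 9) :
    (∃ q : Fin 12 → ZMod 9, ∀ j, c j = ∑ k, q k * extRow gCoef k j) ↔
      ∃ p, ∀ j, c ((1 : Equiv.Perm (Fin 24)) j) = enc9 p j := by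
  refine row_space_iff (A := fun k i => shiftRow gCoef k i) (B := vRow) ?_ ?_ c
  · decide +kernel
  · decide +kernel

theorem rows_t (c : Fin 24 → ZMod 9) :
    (∃ q : Fin 12 → ZMod 9, ∀ j, c j = ∑ k, q k * extRow tCoef k j) ↔
      ∃ p, ∀ j, c (revPerm j) = enc9 p j := by
  refine row_space_iff (A := fun k i => -shiftRow gCoef (Fin.rev k) i)
    (B := fun i k => -vRow i (Fin.rev k)) ?_ ?_ c
  · have h : ∀ k j, extRow tCoef k (revFun j) =
        ∑ i : Fin 12, -shiftRow gCoef (Fin.rev k) i * (rowN i j : ZMod 9) := by decide +kernel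
    exact h
  · have h : ∀ (i : Fin 12) (j : Fin 24), (rowN i j : ZMod 9) =
      ∑ k, -vRow i (Fin.rev k) * extRow tCoef k (revFun j) := by decide +kernel
    exact h

/-- Up to a permutation of coordinates, the lifted code is the one generated by `rowsL`: the two choices of
`g` give codes that are reflections of each other. -/
theorem code_eq {g : Polynomial (ZMod 3)} (hg : IsQRFactor 3 g)
    {g2 : Polynomial (ZMod 9)} {C2 : Submodule (ZMod 9) (Fin 24 → ZMod 9)}
    (hC2 : IsLiftedQR (by norm_num : (3:ℕ) ∣ 9) g g2 C2) :
    ∃ ρ : Equiv.Perm (Fin 24), ∀ c, c ∈ C2 ↔ ∃ p, ∀ j, c (ρ j) = enc9 p j := by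
  obtain ⟨hm, hd, ⟨H, hH⟩, hr, hmem⟩ := hC2
  rcases lifted_gen hg hm hd ⟨H, hH⟩ hr with rfl | rfl
  · exact ⟨1, fun c => (hmem c).trans
      ((mem_iff_extRow gCoef (by decide) (by decide) hH.symm c).trans (rows_g c))⟩
  · exact ⟨revPerm, fun c => (hmem c).trans
      ((mem_iff_extRow tCoef (by decide) (by decide) hH.symm c).trans (rows_t c))⟩

/-! ### The weight enumerator -/

/-- The values of the symmetrized weight enumerator, as sums over messages. -/
theorem eval_swe (C2 : Submodule (ZMod 9) (Fin 24 → ZMod 9)) (ρ : Equiv.Perm (Fin 24))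
    (hC : ∀ c, c ∈ C2 ↔ ∃ p, ∀ j, c (ρ j) = enc9 p j) (v : Fin 3 → ℚ) :
    ((eval v (swe 3 2 C2) : ℚ) : ℂ) =
      ∑ p, ∏ j, fv (v 0) (v 1) (v 2) (enc9 p j) := by
  have hterm : ∀ c : Fin 24 → ZMod 9, ((eval v
      ((∏ i : Fin 2, (X (Fin.castSucc i) : MvPolynomial (Fin (2 + 1)) ℚ) ^
          (Finset.univ.filter fun j => c j ≠ 0 ∧ padicValNat 3 (c j).val = (i : ℕ)).card)
        * (X (Fin.last 2) : MvPolynomial (Fin (2 + 1)) ℚ) ^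
            (Finset.univ.filter fun j => c j = 0).card) : ℚ) : ℂ)
      = ∏ j, fv (v 0) (v 1) (v 2) (c j) := by
    intro c
    have h0 : ∀ y : ZMod 9, y ≠ 0 → (red y = 0 → padicValNat 3 y.val = 1) ∧
        (red y ≠ 0 → padicValNat 3 y.val = 0) := by
      intro y hy
      constructor
      · intro h
        have : y.val = 3 ^ 1 * 1 ∨ y.val = 3 ^ 1 * 2 := by revert y; decide +kernel
        rcases this with h | h <;> rw [h] <;>
          rw [padicValNat_base_pow_mul (by norm_num) (by norm_num),
            padicValNat.eq_zero_of_not_dvd (by norm_num)]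
      · intro h
        have : ¬ 3 ∣ y.val := by revert y; decide +kernel
        exact padicValNat.eq_zero_of_not_dvd this
    have hf : ∀ y : ZMod 9, fv (v 0) (v 1) (v 2) y =
        ((if y ≠ 0 ∧ padicValNat 3 y.val = 0 then (v 0 : ℂ) else 1) *
         (if y ≠ 0 ∧ padicValNat 3 y.val = 1 then (v 1 : ℂ) else 1)) *
         (if y = 0 then (v 2 : ℂ) else 1) := by
      intro y
      rw [fv]
      by_cases hy : y = 0
      · simp [hy]
      · by_cases hr : red y = 0
        · simp [hy, hr, (h0 y hy).1 hr]
        · simp [hy, hr, (h0 y hy).2 hr]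
    simp only [hf, Finset.prod_mul_distrib, Finset.prod_ite, Finset.prod_const, one_pow, mul_one,
      Fin.prod_univ_two, map_mul, map_pow, eval_X]
    push_cast
    rfl
  rw [swe, map_sum, Rat.cast_sum]
  have hs : ∀ c : Fin 24 → ZMod 9, ((eval v (if c ∈ C2 then
      (∏ i : Fin 2, (X (Fin.castSucc i) : MvPolynomial (Fin (2 + 1)) ℚ) ^
          (Finset.univ.filter fun j => c j ≠ 0 ∧ padicValNat 3 (c j).val = (i : ℕ)).card)
        * (X (Fin.last 2) : MvPolynomial (Fin (2 + 1)) ℚ) ^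
            (Finset.univ.filter fun j => c j = 0).card else 0) : ℚ) : ℂ)
      = if c ∈ C2 then ∏ j, fv (v 0) (v 1) (v 2) (c j) else 0 := by
    intro c
    split_ifs with h
    · exact hterm c
    · simp
  refine (Finset.sum_congr rfl fun c _ => hs c).trans ?_
  symm
  refine Fintype.sum_of_injective (fun p j => enc9 p (ρ.symm j)) ?_ _ _ ?_ ?_
  · intro p p' h
    funext k
    have := congrFun h (ρ (pos k))
    simpa [enc9_pos] using this
  · intro c hc
    rw [if_neg]
    intro h
    obtain ⟨p, hp⟩ := (hC c).1 h
    refine hc ⟨p, ?_⟩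
    funext j
    have := hp (ρ.symm j)
    rw [Equiv.apply_symm_apply] at this
    exact this.symm
  · intro p
    rw [if_pos ((hC _).2 ⟨p, fun j => by rw [Equiv.symm_apply_apply]⟩)]
    exact (Equiv.prod_comp ρ.symm (fun j => fv (v 0) (v 1) (v 2) (enc9 p j))).symm

/-- The symmetrized weight enumerator of the `ℤ/9ℤ`-linear extended QR code of length 24. -/
theorem stmt_19 (g : Polynomial (ZMod 3)) (hg : IsQRFactor 3 g)
    (g2 : Polynomial (ZMod 9)) (C2 : Submodule (ZMod 9) (Fin 24 → ZMod 9))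
    (hC2 : IsLiftedQR (by norm_num : (3:ℕ) ∣ 9) g g2 C2) :
    swe 3 2 C2 = ((3:ℚ) ^ 12)⁻¹ • Ft (3 * X 0) (X 2 - X 1) (X 2 + 2 * X 1) := by
  obtain ⟨ρ, hρ⟩ := code_eq hg hC2
  refine MvPolynomial.funext fun v => ?_
  have hinj : Function.Injective (fun q : ℚ => (q : ℂ)) := Rat.cast_injective
  apply hinj
  change ((eval v (swe 3 2 C2) : ℚ) : ℂ) = _
  rw [eval_swe C2 ρ hρ v]
  have h := sum_fv (v 0) (v 1) (v 2)
  rw [sum_phi] at h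
  rw [← mul_right_inj' (show (3 : ℂ) ^ 12 ≠ 0 by norm_num), h]
  simp only [smul_eval, Ft, Pt, Qt, map_add, map_sub, map_mul, map_pow, map_neg, eval_X, map_ofNat]
  push_cast
  rw [mul_inv_cancel_left₀ (by norm_num)]
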